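/- arXiv:2309.09188 — 4 statements merged into one kernel-verified Lean document; each statement's English description precedes it below -/
import Mathlib

section
/- Let I be a monomial ideal of the polynomial ring S = K[x_1,...,x_n] over a field K. Then for every associated prime p of I, the local v-number satisfies v_p(I) ≥ α(I) − 1, where α(I) is the initial degree of I. -/
open MvPolynomial

noncomputable section

variable (K : Type*) [Field K]

/-- The set of associated primes of `S/I`. -/
def assPrimes {σ : Type*} (I : Ideal (MvPolynomial σ K)) : Set (Ideal (MvPolynomial σ K)) :=
  associatedPrimes (MvPolynomial σ K) (MvPolynomial σ K ⧸ I)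

/-- The v-number of `I` at a prime `p`:
`min {d : ∃ homogeneous f of degree d with (I : f) = p}`. -/
def vNumberAt {σ : Type*} (I p : Ideal (MvPolynomial σ K)) : ℕ :=
  sInf {d | ∃ f : MvPolynomial σ K, f.IsHomogeneous d ∧ I.colon (Ideal.span {f}) = p}

/-- The v-number of `I`:
`min {d : ∃ homogeneous f of degree d with (I : f) ∈ Ass(I)}`. -/
def vNumber {σ : Type*} (I : Ideal (MvPolynomial σ K)) : ℕ :=
  sInf {d | ∃ f : MvPolynomial σ K, f.IsHomogeneous d ∧
    I.colon (Ideal.span {f}) ∈ assPrimes K I}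

/-- The initial degree `α(I) = min {d : I_d ≠ 0}`. -/
def initialDegree {σ : Type*} (I : Ideal (MvPolynomial σ K)) : ℕ :=
  sInf {d | ∃ f ∈ I, f ≠ 0 ∧ f.IsHomogeneous d}

/-- A monomial ideal: an ideal generated by monomials. -/
def IsMonomialIdeal {σ : Type*} (I : Ideal (MvPolynomial σ K)) : Prop :=
  ∃ A : Set (σ →₀ ℕ), I = Ideal.span ((fun m => (monomial m (1 : K) : MvPolynomial σ K)) '' A)

/-! If `p = (I : f)` with `f` homogeneous of degree `v_p(I)` and `h ∈ p` is nonzero and homogeneous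
of degree `α(p)`, then `f * h` is a nonzero element of `I`, so `α(I) ≤ v_p(I) + α(p)` for every
homogeneous ideal `I`. If `I` is a nonzero monomial ideal, then the prime `p ⊇ I` contains a
monomial, hence a variable, and `α(p) ≤ 1`.

That such an `f` exists is a statement on graded rings. If `p = (I : g)` is prime, then `p` is
homogeneous: for `r ∈ p`, multiply the top component of `r` outside `p` by the top component
of `g` that does not vanish in `(A/I)ₚ`. Then `p` is the intersection of the ideals `(I : gᵢ)`, for
`gᵢ` the components of `g`, and being prime it equals one of them.
-/

section GradedRing

open DirectSum

variable {ι σ A : Type*}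

section Semiring

variable [Semiring A] [SetLike σ A] [AddSubmonoidClass σ A]

theorem mem_of_forall_decompose_mem [DecidableEq ι] (𝒜 : ι → σ) [Decomposition 𝒜] {I : Ideal A}
    {x : A} (hx : ∀ i, (decompose 𝒜 x i : A) ∈ I) : x ∈ I := by
  classical
  rw [← sum_support_decompose 𝒜 x]
  exact I.sum_mem fun i _ => hx i

theorem mul_decompose_mem [DecidableEq ι] [AddLeftCancelMonoid ι] {𝒜 : ι → σ} [GradedRing 𝒜]
    {I : Ideal A} (hI : I.IsHomogeneous 𝒜) {i : ι} {a x : A} (ha : a ∈ 𝒜 i) (hax : a * x ∈ I)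
    (j : ι) : a * decompose 𝒜 x j ∈ I := by
  rw [← coe_decompose_mul_add_of_left_mem 𝒜 ha]
  exact hI (i + j) hax

theorem exists_last_decompose_notMem [LinearOrder ι] {𝒜 : ι → σ} [Decomposition 𝒜]
    {I : Ideal A} {x : A} {i : ι} (hi : (decompose 𝒜 x i : A) ∉ I) :
    ∃ n, (decompose 𝒜 x n : A) ∉ I ∧ ∀ j, n < j → (decompose 𝒜 x j : A) ∈ I := by
  classical
  have hfin : {j | (decompose 𝒜 x j : A) ∉ I}.Finite :=
    (decompose 𝒜 x).support.finite_toSet.subset fun j hj => by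
      rw [Finset.mem_coe, DFinsupp.mem_support_iff]
      exact fun h0 => hj (by simp [h0])
  obtain ⟨n, hn⟩ := hfin.exists_maximal ⟨i, hi⟩
  exact ⟨n, hn.prop, fun j hj => not_not.1 fun hjI => hn.not_prop_of_gt hj hjI⟩

end Semiring

variable [CommRing A] [AddCancelCommMonoid ι] [LinearOrder ι] [IsOrderedAddMonoid ι]
  [SetLike σ A] [AddSubmonoidClass σ A] {𝒜 : ι → σ} [GradedRing 𝒜] {I : Ideal A}

theorem decompose_mul_add_mem_iff {r g : A} {m n : ι}
    (h : ∀ i j, m < i ∨ n < j → (decompose 𝒜 r i * decompose 𝒜 g j : A) ∈ I) :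
    (decompose 𝒜 (r * g) (m + n) : A) ∈ I ↔ (decompose 𝒜 r m * decompose 𝒜 g n : A) ∈ I := by
  classical
  simp only [← Ideal.Quotient.eq_zero_iff_mem, decompose_mul, coe_mul_apply, map_sum] at h ⊢
  rw [Finset.sum_eq_single (m, n)]
  · rintro ⟨i, j⟩ hij hne
    have hsum : i + j = m + n := (Finset.mem_filter.1 hij).2
    refine h i j ((le_or_lt_of_add_le_add hsum.ge).imp_left fun hmi => hmi.lt_of_ne ?_)
    rintro rfl
    exact hne (Prod.ext rfl (add_left_cancel hsum))
  · intro hmn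
    have h0 : decompose 𝒜 r m = 0 ∨ decompose 𝒜 g n = 0 := by
      simpa [or_iff_not_imp_left] using hmn
    rcases h0 with h0 | h0 <;> simp [h0]

theorem isHomogeneous_colon_singleton_of_isPrime (hI : I.IsHomogeneous 𝒜) {g : A}
    (hp : (I.colon {g}).IsPrime) : (I.colon {g}).IsHomogeneous 𝒜 := by
  set p := I.colon {g}
  have mem_p : ∀ {r}, r ∈ p ↔ r * g ∈ I := Submodule.mem_colon_singleton
  -- Modulo the contraction `J` of `I Aₚ`, every element outside `p` is a nonzerodivisor.
  let J : Ideal A := (I.map (algebraMap A (Localization.AtPrime p))).under A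
  have mem_J : ∀ {x}, x ∈ J ↔ ∃ t ∈ p.primeCompl, t * x ∈ I :=
    IsLocalization.algebraMap_mem_map_algebraMap_iff p.primeCompl _ I _
  have hIJ : I ≤ J := Ideal.le_comap_map
  have hg : g ∉ J := fun h => by
    obtain ⟨t, ht, htg⟩ := mem_J.1 h
    exact ht (mem_p.2 htg)
  intro i r hr
  by_contra hri
  obtain ⟨m, hm, hm_last⟩ := exists_last_decompose_notMem hri
  obtain ⟨j, hj⟩ : ∃ j, (decompose 𝒜 g j : A) ∉ J := by
    contrapose! hg
    exact mem_of_forall_decompose_mem 𝒜 hg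
  obtain ⟨n, hn, hn_last⟩ := exists_last_decompose_notMem hj
  have hrest : ∀ i j, m < i ∨ n < j → (decompose 𝒜 r i * decompose 𝒜 g j : A) ∈ J := by
    rintro i j (hi | hj)
    · exact hIJ (mul_decompose_mem hI (SetLike.coe_mem _) (mem_p.1 (hm_last i hi)) j)
    · exact J.mul_mem_left _ (hn_last j hj)
  have hmn : (decompose 𝒜 r m * decompose 𝒜 g n : A) ∈ J :=
    (decompose_mul_add_mem_iff hrest).1 (hIJ (hI _ (mem_p.1 hr)))
  obtain ⟨t, ht, htmn⟩ := mem_J.1 hmn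
  exact hn (mem_J.2 ⟨t * decompose 𝒜 r m, p.primeCompl.mul_mem ht hm, by rwa [mul_assoc]⟩)

theorem exists_colon_singleton_decompose_eq (hI : I.IsHomogeneous 𝒜) {g : A}
    (hp : (I.colon {g}).IsPrime) :
    ∃ i, I.colon {(decompose 𝒜 g i : A)} = I.colon {g} := by
  classical
  have hle : ∀ i, I.colon {g} ≤ I.colon {(decompose 𝒜 g i : A)} := fun i r hr =>
    mem_of_forall_decompose_mem 𝒜 fun j =>
      have hrj : decompose 𝒜 r j * g ∈ I :=
        Submodule.mem_colon_singleton.1 (isHomogeneous_colon_singleton_of_isPrime hI hp j hr)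
      Submodule.mem_colon_singleton.2 (mul_decompose_mem hI (SetLike.coe_mem _) hrj i)
  have hinf : (decompose 𝒜 g).support.inf (fun i => I.colon {(decompose 𝒜 g i : A)}) ≤
      I.colon {g} := by
    intro r hr
    rw [Submodule.mem_finsetInf] at hr
    rw [Submodule.mem_colon_singleton, ← sum_support_decompose 𝒜 g, Finset.smul_sum]
    exact I.sum_mem fun i hi => Submodule.mem_colon_singleton.1 (hr i hi)
  obtain ⟨i, -, hi⟩ := hp.inf_le'.1 hinf
  exact ⟨i, hi.antisymm (hle i)⟩

theorem exists_homogeneous_colon_singleton_eq [IsNoetherianRing A] (hI : I.IsHomogeneous 𝒜)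
    {p : Ideal A} (hp : p ∈ associatedPrimes A (A ⧸ I)) : ∃ i, ∃ f ∈ 𝒜 i, I.colon {f} = p := by
  obtain ⟨hprime, x, rfl⟩ := isAssociatedPrime_iff.1 hp
  obtain ⟨g, rfl⟩ := Ideal.Quotient.mk_surjective x
  have hg : (⊥ : Submodule A (A ⧸ I)).colon {Ideal.Quotient.mk I g} = I.colon {g} := by
    ext r
    rw [Submodule.mem_colon_singleton, Submodule.mem_colon_singleton, Submodule.mem_bot,
      ← Ideal.Quotient.eq_zero_iff_mem]
    rfl
  rw [hg] at hprime ⊢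
  obtain ⟨i, hi⟩ := exists_colon_singleton_decompose_eq hI hprime
  exact ⟨i, _, SetLike.coe_mem _, hi⟩

end GradedRing

section MvPolynomial

attribute [local instance] MvPolynomial.gradedAlgebra

variable {K} {σ : Type*} {I p : Ideal (MvPolynomial σ K)}

variable (K) in
theorem initialDegree_bot : initialDegree K (⊥ : Ideal (MvPolynomial σ K)) = 0 := by
  simp [initialDegree]

theorem initialDegree_le {f : MvPolynomial σ K} {d : ℕ} (hfI : f ∈ I) (hf0 : f ≠ 0)
    (hf : f.IsHomogeneous d) : initialDegree K I ≤ d :=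
  Nat.sInf_le ⟨f, hfI, hf0, hf⟩

theorem exists_isHomogeneous_initialDegree (hI : I.IsHomogeneous (homogeneousSubmodule σ K))
    (hI0 : I ≠ ⊥) : ∃ f ∈ I, f ≠ 0 ∧ f.IsHomogeneous (initialDegree K I) := by
  obtain ⟨f, hfI, hf0⟩ := Submodule.exists_mem_ne_zero_of_ne_bot hI0
  obtain ⟨d, hd⟩ : ∃ d, homogeneousComponent d f ≠ 0 := by
    contrapose! hf0
    rw [← sum_homogeneousComponent f, Finset.sum_eq_zero fun d _ => hf0 d]
  exact Nat.sInf_mem (s := {d | ∃ f ∈ I, f ≠ 0 ∧ f.IsHomogeneous d})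
    ⟨d, _, homogeneousComponent_mem_of_mem hI hfI d, hd, homogeneousComponent_isHomogeneous d f⟩

theorem exists_isHomogeneous_vNumberAt [Finite σ]
    (hI : I.IsHomogeneous (homogeneousSubmodule σ K)) (hp : p ∈ assPrimes K I) :
    ∃ f : MvPolynomial σ K, f.IsHomogeneous (vNumberAt K I p) ∧ I.colon {f} = p := by
  obtain ⟨d, f, hf, hfp⟩ := exists_homogeneous_colon_singleton_eq hI hp
  simp only [vNumberAt, Ideal.colon_span]
  exact Nat.sInf_mem (s := {d | ∃ f : MvPolynomial σ K, f.IsHomogeneous d ∧ I.colon {f} = p})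
    ⟨d, f, hf, hfp⟩

theorem initialDegree_le_vNumberAt_add_initialDegree [Finite σ]
    (hI : I.IsHomogeneous (homogeneousSubmodule σ K)) (hp : p ∈ assPrimes K I) :
    initialDegree K I ≤ vNumberAt K I p + initialDegree K p := by
  have hprime : p.IsPrime := hp.isPrime
  obtain ⟨f, hf, rfl⟩ := exists_isHomogeneous_vNumberAt hI hp
  rcases eq_or_ne (I.colon {f}) ⊥ with hbot | hbot
  · have hI0 : I = ⊥ := eq_bot_iff.2 (Ideal.le_colon.trans hbot.le)
    simp only [hI0, initialDegree_bot, zero_le]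
  · obtain ⟨h, hh, h0, hhom⟩ :=
      exists_isHomogeneous_initialDegree (isHomogeneous_colon_singleton_of_isPrime hI hprime) hbot
    have hf0 : f ≠ 0 := by
      rintro rfl
      exact hprime.ne_top Submodule.colon_singleton_zero
    have hfh : f * h ∈ I := mul_comm h f ▸ Submodule.mem_colon_singleton.1 hh
    exact initialDegree_le hfh (mul_ne_zero hf0 h0) (hf.mul hhom)

theorem isHomogeneous_of_isMonomialIdeal (hI : IsMonomialIdeal K I) :
    I.IsHomogeneous (homogeneousSubmodule σ K) := by
  obtain ⟨A, rfl⟩ := hI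
  refine Ideal.homogeneous_span _ _ ?_
  rintro _ ⟨m, -, rfl⟩
  exact ⟨m.degree, isHomogeneous_monomial 1 rfl⟩

theorem exists_monomial_mem_of_isMonomialIdeal (hI : IsMonomialIdeal K I) (hI0 : I ≠ ⊥) :
    ∃ m, monomial m (1 : K) ∈ I := by
  obtain ⟨A, rfl⟩ := hI
  obtain ⟨m, hm⟩ : A.Nonempty := by
    by_contra! hA
    simp [hA] at hI0
  exact ⟨m, Ideal.subset_span ⟨m, hm, rfl⟩⟩

theorem exists_X_mem_of_monomial_mem (hp : p.IsPrime) {m : σ →₀ ℕ}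
    (hm : monomial m (1 : K) ∈ p) : ∃ i, X i ∈ p := by
  rw [monomial_eq, map_one, one_mul, Finsupp.prod, hp.prod_mem_iff] at hm
  obtain ⟨i, -, hi⟩ := hm
  exact ⟨i, hp.mem_of_pow_mem _ hi⟩

end MvPolynomial

theorem stmt0_general {σ : Type*} [Finite σ] (I p : Ideal (MvPolynomial σ K))
    (hI : IsMonomialIdeal K I) (hp : p ∈ assPrimes K I) :
    initialDegree K I - 1 ≤ vNumberAt K I p := by
  rcases eq_or_ne I ⊥ with rfl | hI0
  · simp only [initialDegree_bot, zero_tsub, zero_le]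
  · have hIp : I ≤ p := by
      simpa only [Submodule.annihilator_top, Ideal.annihilator_quotient] using
        IsAssociatedPrime.annihilator_le hp
    obtain ⟨m, hm⟩ := exists_monomial_mem_of_isMonomialIdeal hI hI0
    obtain ⟨i, hi⟩ := exists_X_mem_of_monomial_mem hp.isPrime (hIp hm)
    have hp1 : initialDegree K p ≤ 1 := initialDegree_le hi (X_ne_zero i) (isHomogeneous_X K i)
    have := initialDegree_le_vNumberAt_add_initialDegree (isHomogeneous_of_isMonomialIdeal hI) hp
    lia

/-- For a monomial ideal `I` and every associated prime `p` of `I`,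
`v_p(I) ≥ α(I) - 1`. -/
theorem stmt0 {n : ℕ} (I p : Ideal (MvPolynomial (Fin n) K))
    (hI : IsMonomialIdeal K I) (hp : p ∈ assPrimes K I) :
    initialDegree K I - 1 ≤ vNumberAt K I p :=
  stmt0_general K I p hI hp

end
end

section
/- Let I be a graded ideal of S = K[x_1,...,x_n] generated in a single degree. Then: (a) for every stable prime p of I (i.e., p ∈ Ass(I^k) for all k ≫ 0) there exists an integer b_p such that v_p(I^k) = α(I)·k + b_p for all k ≫ 0; and (b) v(I^k) = α(I)·k + b for all k ≫ 0, where b is the minimum of the b_p over all stable primes p of I. -/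
open MvPolynomial

noncomputable section

variable (K : Type*) [Field K]

/-- The stable primes of `I`: primes belonging to `Ass(I^k)` for all `k ≫ 0`. -/
def stablePrimes {σ : Type*} (I : Ideal (MvPolynomial σ K)) : Set (Ideal (MvPolynomial σ K)) :=
  {p | ∃ N : ℕ, ∀ k : ℕ, N ≤ k → p ∈ assPrimes K (I ^ k)}

/-- `I` is generated in a single degree. -/
def Equigenerated {σ : Type*} (I : Ideal (MvPolynomial σ K)) : Prop :=
  ∃ (d : ℕ) (A : Set (MvPolynomial σ K)), (∀ f ∈ A, f.IsHomogeneous d) ∧ I = Ideal.span A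

/-!
Write `C_k = (I^k : p)`. A homogeneous `f` satisfies `(I^k : f) = p` if and only if `f ∈ C_k` and
`f` is not in the contraction of `I^k S_p`. By the Artin–Rees lemma `C_{k+1} = I C_k` for `k ≫ 0`.
So if `I` is generated in degree `d`, an element of degree `e` realizing `v_p(I^{k+1})` is a
combination of products `a c` with `a ∈ I_d` and `c ∈ C_k` of degree `e - d`, and one of these `c`
realizes `p` for `I^k`: the sequence `v_p(I^k) - d k` is eventually nondecreasing. It is bounded,
because `C_k` is generated in degrees at most `D + d k` for some `D`, and hence eventually constant.
For the v-number itself one takes the minimum over `Ass(I^k)`, which is eventually constant: each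
prime eventually enters or leaves for good by the same argument, and only finitely many primes
occur, all of them contracted from associated primes of `gr_I(S)` over the Rees algebra.
-/

open Filter

section LocalContraction

variable {R : Type*} [CommRing R] {I J p : Ideal R} {f : R}

theorem mem_associatedPrimes_quotient_iff [IsNoetherianRing R] :
    p ∈ associatedPrimes R (R ⧸ J) ↔ p.IsPrime ∧ ∃ f, J.colon {f} = p := by
  have colon_mk (f : R) : (⊥ : Submodule R (R ⧸ J)).colon {Ideal.Quotient.mk J f} =
      J.colon {f} := by
    ext r
    rw [Submodule.mem_colon_singleton, Submodule.mem_colon_singleton, Submodule.mem_bot,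
      Algebra.smul_def, Ideal.Quotient.algebraMap_eq, ← map_mul, Ideal.Quotient.eq_zero_iff_mem,
      smul_eq_mul]
  rw [AssociatedPrimes.mem_iff, isAssociatedPrime_iff, Ideal.Quotient.mk_surjective.exists]
  simp only [colon_mk, eq_comm]

theorem le_of_colon_singleton_eq (h : J.colon {f} = p) : J ≤ p := by
  rw [← h]
  exact fun r hr ↦ Submodule.mem_colon_singleton.2 (J.mul_mem_right f hr)

/-- The contraction to `R` of the extension of `J` to the localization `R_p`. It is the ideal of
those `f` for which `(J : f)` is not contained in `p`, so it tells which `f ∈ (J : p)` satisfy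
`(J : f) = p`. -/
def localContraction (J p : Ideal R) [p.IsPrime] : Ideal R :=
  (J.map (algebraMap R (Localization.AtPrime p))).comap (algebraMap R (Localization.AtPrime p))

variable [p.IsPrime]

theorem le_localContraction : J ≤ localContraction J p :=
  Ideal.le_comap_map

theorem mem_localContraction_iff : f ∈ localContraction J p ↔ ∃ s ∉ p, s * f ∈ J :=
  IsLocalization.algebraMap_mem_map_algebraMap_iff p.primeCompl _ J f

theorem notMem_localContraction_iff : f ∉ localContraction J p ↔ J.colon {f} ≤ p := by
  simp only [mem_localContraction_iff, not_exists, not_and, SetLike.le_def,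
    Submodule.mem_colon_singleton, smul_eq_mul]
  exact forall_congr' fun _ ↦ not_imp_not

theorem mul_mem_localContraction_iff {s : R} (hs : s ∉ p) :
    s * f ∈ localContraction J p ↔ f ∈ localContraction J p := by
  rw [localContraction, Ideal.mem_comap, map_mul, Ideal.unit_mul_mem_iff_mem, Ideal.mem_comap]
  exact IsLocalization.map_units (Localization.AtPrime p) (⟨s, hs⟩ : p.primeCompl)

theorem mul_mem_localContraction_pow_succ {a : R} {k : ℕ} (ha : a ∈ I)
    (hf : f ∈ localContraction (I ^ k) p) : a * f ∈ localContraction (I ^ (k + 1)) p := by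
  rw [localContraction, Ideal.mem_comap, Ideal.map_pow] at hf ⊢
  rw [map_mul, pow_succ']
  exact Ideal.mul_mem_mul (Ideal.mem_map_of_mem _ ha) hf

theorem colon_singleton_eq_iff :
    J.colon {f} = p ↔ f ∈ J.colon p ∧ f ∉ localContraction J p := by
  have le_colon_iff : p ≤ J.colon {f} ↔ f ∈ J.colon p := by
    simp only [SetLike.le_def, Submodule.mem_colon, Set.mem_singleton_iff, forall_eq,
      SetLike.mem_coe, smul_eq_mul, mul_comm f]
  rw [le_antisymm_iff, and_comm, le_colon_iff, notMem_localContraction_iff]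

theorem colon_singleton_mul_eq {s : R} (hs : s ∉ p) (h : J.colon {f} = p) :
    J.colon {s * f} = p := by
  rw [colon_singleton_eq_iff] at h ⊢
  exact ⟨Ideal.mul_mem_left _ s h.1, (mul_mem_localContraction_iff hs).not.2 h.2⟩

theorem colon_singleton_eq_of_mul_notMem {a c : R} {k : ℕ} (ha : a ∈ I) (hc : c ∈ (I ^ k).colon p)
    (hac : a * c ∉ localContraction (I ^ (k + 1)) p) : (I ^ k).colon {c} = p :=
  colon_singleton_eq_iff.2 ⟨hc, fun h ↦ hac (mul_mem_localContraction_pow_succ ha h)⟩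

end LocalContraction

section Colon

variable {R : Type*} [CommRing R] {I p : Ideal R}

theorem colon_pow_succ_le (k : ℕ) : (I ^ (k + 1)).colon p ≤ (I ^ k).colon (p : Set R) :=
  Submodule.colon_mono (Ideal.pow_le_pow_right k.le_succ) le_rfl

theorem mul_colon_pow_le (k : ℕ) :
    I * (I ^ k).colon p ≤ (I ^ (k + 1)).colon (p : Set R) := by
  refine Ideal.mul_le.2 fun a ha c hc ↦ Submodule.mem_colon.2 fun q hq ↦ ?_
  rw [smul_eq_mul, mul_assoc, pow_succ']
  exact Ideal.mul_mem_mul ha (Submodule.mem_colon.1 hc q hq)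

/-- For `a ∈ p` the ideals `a (I ^ k : p) ⊆ I ^ k` form an `I`-filtration, which is stable by the
Artin–Rees lemma; then cancel `a`. -/
theorem eventually_colon_pow_succ_eq [IsNoetherianRing R]
    (hreg : ∃ a ∈ p, a ∈ nonZeroDivisors R) :
    ∀ᶠ k in atTop, (I ^ (k + 1)).colon (p : Set R) = I * (I ^ k).colon p := by
  obtain ⟨a, hap, ha⟩ := hreg
  let F : I.Filtration R :=
    { N := fun k ↦ Ideal.span {a} * (I ^ k).colon p
      mono := fun k ↦ Ideal.mul_mono_right (colon_pow_succ_le k)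
      smul_le := fun k ↦ by
        rw [smul_eq_mul, mul_left_comm]
        exact Ideal.mul_mono_right (mul_colon_pow_le k) }
  have le_pow : F ≤ I.stableFiltration ⊤ := fun k ↦ by
    change Ideal.span {a} * (I ^ k).colon p ≤ I ^ k • (⊤ : Ideal R)
    rw [smul_eq_mul, Ideal.mul_top, Ideal.span_singleton_mul_le_iff]
    exact fun c hc ↦ mul_comm a c ▸ Submodule.mem_colon.1 hc a hap
  obtain ⟨k₀, hk₀⟩ := (I.stableFiltration_stable ⊤).of_le le_pow
  refine eventually_atTop.2 ⟨k₀, fun k hk ↦ ?_⟩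
  have stable : I * (Ideal.span {a} * (I ^ k).colon p) =
      Ideal.span {a} * (I ^ (k + 1)).colon p := hk₀ k hk
  rw [mul_left_comm] at stable
  refine le_antisymm (fun f hf ↦ ?_) (mul_colon_pow_le k)
  obtain ⟨z, hz, hzf⟩ := Ideal.mem_span_singleton_mul.1
    (stable.ge (Ideal.mul_mem_mul (Ideal.mem_span_singleton_self a) hf))
  exact (mul_cancel_left_mem_nonZeroDivisors ha).1 hzf ▸ hz

theorem mem_associatedPrimes_pow_of_colon_le [IsNoetherianRing R] {k : ℕ}
    (hC : (I ^ (k + 1)).colon p ≤ I * (I ^ k).colon p)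
    (hp : p ∈ associatedPrimes R (R ⧸ I ^ (k + 1))) : p ∈ associatedPrimes R (R ⧸ I ^ k) := by
  obtain ⟨_, f, hf⟩ := mem_associatedPrimes_quotient_iff.1 hp
  obtain ⟨hfC, hfL⟩ := colon_singleton_eq_iff.1 hf
  by_contra hk
  refine hfL (Ideal.mul_le.2 (fun a ha c hc ↦ ?_) (hC hfC))
  by_contra hac
  exact hk (mem_associatedPrimes_quotient_iff.2
    ⟨‹_›, c, colon_singleton_eq_of_mul_notMem ha hc hac⟩)

end Colon

section ReesAlgebra

theorem exists_associatedPrime_comap_eq {R S : Type*} [CommRing R] [CommRing S]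
    [IsNoetherianRing S] (φ : R →+* S) {J : Ideal S} {x : S} {p : Ideal R} [p.IsPrime]
    (h : (J.colon {x}).comap φ = p) : ∃ P ∈ associatedPrimes S (S ⧸ J), P.comap φ = p := by
  have minimal : p ∈ ((J.colon {x}).comap φ).minimalPrimes := by
    rw [h, Ideal.minimalPrimes_eq_subsingleton_self]
    rfl
  obtain ⟨P, hP, hPp⟩ := Ideal.exists_minimalPrimes_comap_eq φ p minimal
  obtain ⟨y, hy⟩ := Submodule.exists_eq_colon_of_mem_minimalPrimes hP
  exact ⟨P, mem_associatedPrimes_quotient_iff.2 ⟨hP.1.1, y, hy.symm⟩, hPp⟩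

variable {R : Type*} [CommRing R] (I : Ideal R)

/-- The ideal `⊕ I^(k+1) t^k` of the Rees algebra `⊕ I^k t^k`, i.e. the extension of `I`. The
quotient by it is the associated graded ring of `I`, and for `R` Noetherian every prime occurring in
some `Ass(I^k)` is contracted from one of its associated primes. -/
def reesIdeal : Ideal (reesAlgebra I) where
  carrier := {F | ∀ i, (F : Polynomial R).coeff i ∈ I ^ (i + 1)}
  zero_mem' i := by simp
  add_mem' ha hb i := by simpa using Ideal.add_mem _ (ha i) (hb i)
  smul_mem' c F hF i := by
    rw [smul_eq_mul, MulMemClass.coe_mul, Polynomial.coeff_mul]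
    refine Ideal.sum_mem _ fun ⟨j, l⟩ hjl ↦ ?_
    rw [← Finset.HasAntidiagonal.mem_antidiagonal.1 hjl, add_assoc, pow_add]
    exact Ideal.mul_mem_mul (c.2 j) (hF l)

variable {I}

theorem comap_colon_reesIdeal {k : ℕ} {g : R} (hg : g ∈ I ^ k) :
    ((reesIdeal I).colon {⟨Polynomial.monomial k g, reesAlgebra.monomial_mem.2 hg⟩}).comap
      (algebraMap R (reesAlgebra I)) = (I ^ (k + 1)).colon {g} := by
  ext r
  have coeff_smul (i : ℕ) : (Polynomial.C r * Polynomial.monomial k g).coeff i =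
      if k = i then r * g else 0 := by
    rw [Polynomial.C_mul_monomial, Polynomial.coeff_monomial]
  rw [Ideal.mem_comap, Submodule.mem_colon_singleton, Submodule.mem_colon_singleton]
  change (∀ i, (Polynomial.C r * Polynomial.monomial k g).coeff i ∈ I ^ (i + 1)) ↔
    r * g ∈ I ^ (k + 1)
  refine ⟨fun h ↦ by simpa only [coeff_smul, if_true] using h k, fun h i ↦ ?_⟩
  rw [coeff_smul]
  split_ifs with hki
  · exact hki ▸ h
  · exact Ideal.zero_mem _

variable [IsNoetherianRing R]

theorem associatedPrimes_pow_succ_subset (k : ℕ) :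
    associatedPrimes R (R ⧸ I ^ (k + 1)) ⊆ associatedPrimes R (R ⧸ I ^ k) ∪
      Ideal.comap (algebraMap R (reesAlgebra I)) ''
        associatedPrimes (reesAlgebra I) (reesAlgebra I ⧸ reesIdeal I) := by
  intro p hp
  obtain ⟨_, f, hf⟩ := mem_associatedPrimes_quotient_iff.1 hp
  by_cases hfL : f ∈ localContraction (I ^ k) p
  · obtain ⟨s, hs, hsf⟩ := mem_localContraction_iff.1 hfL
    exact .inr (exists_associatedPrime_comap_eq _
      ((comap_colon_reesIdeal hsf).trans (colon_singleton_mul_eq hs hf)))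
  · have hfC := (colon_singleton_eq_iff.1 hf).1
    exact .inl (mem_associatedPrimes_quotient_iff.2
      ⟨‹_›, f, colon_singleton_eq_iff.2 ⟨colon_pow_succ_le k hfC, hfL⟩⟩)

variable (I) in
theorem finite_iUnion_associatedPrimes_pow :
    (⋃ k, associatedPrimes R (R ⧸ I ^ k)).Finite := by
  refine ((associatedPrimes.finite _ _).image _ : (Ideal.comap (algebraMap R (reesAlgebra I)) ''
    associatedPrimes (reesAlgebra I) (reesAlgebra I ⧸ reesIdeal I)).Finite).subset
    (Set.iUnion_subset fun k ↦ ?_)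
  induction k with
  | zero =>
    rw [pow_zero, Ideal.one_eq_top, associatedPrimes.eq_empty_of_subsingleton]
    exact Set.empty_subset _
  | succ k ih => exact (associatedPrimes_pow_succ_subset k).trans (Set.union_subset ih subset_rfl)

end ReesAlgebra

section StablePrimes

variable {R : Type*} [CommRing R] {I : Ideal R}

/-- The set `Ass^∞(I)` of the primes associated to all sufficiently high powers of `I`. -/
def stableAssociatedPrimes (I : Ideal R) : Set (Ideal R) :=
  {p | ∀ᶠ k in atTop, p ∈ associatedPrimes R (R ⧸ I ^ k)}

variable [IsNoetherianRing R]

theorem finite_stableAssociatedPrimes : (stableAssociatedPrimes I).Finite :=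
  (finite_iUnion_associatedPrimes_pow I).subset fun _ hp ↦ Set.mem_iUnion.2 hp.exists

theorem le_of_mem_associatedPrimes_pow {k : ℕ} {p : Ideal R}
    (hp : p ∈ associatedPrimes R (R ⧸ I ^ k)) : I ≤ p := by
  obtain ⟨hp, f, hf⟩ := mem_associatedPrimes_quotient_iff.1 hp
  exact hp.le_of_pow_le (le_of_colon_singleton_eq hf)

theorem eventually_mem_associatedPrimes_of_pow_succ
    (hreg : I ≠ ⊥ → ∃ a ∈ I, a ∈ nonZeroDivisors R) (p : Ideal R) :
    ∀ᶠ k in atTop, p ∈ associatedPrimes R (R ⧸ I ^ (k + 1)) →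
      p ∈ associatedPrimes R (R ⧸ I ^ k) := by
  rcases eq_or_ne I ⊥ with rfl | hbot
  · filter_upwards [eventually_ne_atTop 0] with k hk
    rw [Ideal.bot_pow hk, Ideal.bot_pow k.succ_ne_zero]
    exact id
  · by_cases hIp : I ≤ p
    · obtain ⟨a, haI, ha⟩ := hreg hbot
      filter_upwards [eventually_colon_pow_succ_eq ⟨a, hIp haI, ha⟩] with k hk
      exact mem_associatedPrimes_pow_of_colon_le hk.le
    · exact .of_forall fun k hp ↦ absurd (le_of_mem_associatedPrimes_pow hp) hIp

theorem eventually_mem_associatedPrimes_pow_iff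
    (hreg : I ≠ ⊥ → ∃ a ∈ I, a ∈ nonZeroDivisors R) (p : Ideal R) :
    ∀ᶠ k in atTop, (p ∈ associatedPrimes R (R ⧸ I ^ k) ↔ p ∈ stableAssociatedPrimes I) := by
  by_cases hp : p ∈ stableAssociatedPrimes I
  · filter_upwards [hp] with k hk using iff_of_true hk hp
  · obtain ⟨k₀, hk₀⟩ := eventually_atTop.1 (eventually_mem_associatedPrimes_of_pow_succ hreg p)
    obtain ⟨k₁, hk₁, hpk₁⟩ := frequently_atTop.1 (not_eventually.1 hp) k₀
    refine eventually_atTop.2 ⟨k₁, fun k hk ↦ iff_of_false ?_ hp⟩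
    induction k, hk using Nat.le_induction with
    | base => exact hpk₁
    | succ k hk ih => exact fun h ↦ ih (hk₀ k (hk₁.trans hk) h)

theorem eventually_associatedPrimes_pow_eq (hreg : I ≠ ⊥ → ∃ a ∈ I, a ∈ nonZeroDivisors R) :
    ∀ᶠ k in atTop, associatedPrimes R (R ⧸ I ^ k) = stableAssociatedPrimes I := by
  have uniform := (eventually_all_finite (finite_iUnion_associatedPrimes_pow I)).2
    fun p _ ↦ eventually_mem_associatedPrimes_pow_iff hreg p
  filter_upwards [uniform] with k hk
  ext p
  refine ⟨fun hp ↦ (hk p (Set.mem_iUnion_of_mem k hp)).1 hp, fun hp ↦ ?_⟩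
  exact (hk p (Set.mem_iUnion.2 (Eventually.exists hp))).2 hp

end StablePrimes

theorem exists_eventually_eq_mul_add {v : ℕ → ℕ} {d D : ℕ}
    (hstep : ∀ᶠ k in atTop, v k + d ≤ v (k + 1)) (hbound : ∀ᶠ k in atTop, v k ≤ D + d * k) :
    ∃ b : ℤ, ∀ᶠ k in atTop, (v k : ℤ) = d * k + b := by
  obtain ⟨k₀, hk₀⟩ := eventually_atTop.1 (hstep.and hbound)
  let w (k : ℕ) : ℤ := v k - d * k
  have mono : Monotone fun k ↦ w (k + k₀) := monotone_nat_of_le_succ fun k ↦ by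
    have := (hk₀ (k + k₀) (Nat.le_add_left _ _)).1
    rw [show k + 1 + k₀ = k + k₀ + 1 by ring]
    simp only [w]
    push_cast
    linarith
  have bdd : BddAbove (Set.range fun k ↦ w (k + k₀)) := ⟨D, by
    rintro _ ⟨k, rfl⟩
    have := (hk₀ (k + k₀) (Nat.le_add_left _ _)).2
    simp only [w, sub_le_iff_le_add]
    exact_mod_cast this⟩
  have lim := (tendsto_add_atTop_iff_nat k₀).1 (tendsto_atTop_ciSup mono bdd)
  rw [nhds_discrete, tendsto_pure] at lim
  refine ⟨⨆ k, w (k + k₀), lim.mono fun k hk ↦ ?_⟩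
  rw [← hk]
  simp only [w, add_sub_cancel]

section HomogeneousIdeal

open DirectSum

variable {A τ : Type*} [CommRing A] [SetLike τ A] [AddSubmonoidClass τ A] {𝒜 : ℕ → τ}
  [GradedRing 𝒜] {J p : Ideal A} {f g : A}

variable (𝒜) in
theorem mem_of_forall_decompose_mem_s2 (h : ∀ i, (decompose 𝒜 f i : A) ∈ J) : f ∈ J := by
  classical
  rw [← sum_support_decompose 𝒜 f]
  exact J.sum_mem fun i _ ↦ h i

theorem isHomogeneous_pow (hJ : J.IsHomogeneous 𝒜) (k : ℕ) : (J ^ k).IsHomogeneous 𝒜 := by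
  induction k with
  | zero => rw [pow_zero, Ideal.one_eq_top]; exact Ideal.IsHomogeneous.top 𝒜
  | succ k ih => rw [pow_succ]; exact ih.mul hJ

theorem isHomogeneous_colon (hJ : J.IsHomogeneous 𝒜) (hp : p.IsHomogeneous 𝒜) :
    (J.colon (p : Set A)).IsHomogeneous 𝒜 := by
  intro i f hf
  refine Submodule.mem_colon.2 fun q hq ↦ mem_of_forall_decompose_mem_s2 𝒜 fun n ↦ ?_
  rw [smul_eq_mul, coe_decompose_mul_of_left_mem 𝒜 n (decompose 𝒜 f i).2]
  split_ifs with hin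
  · rw [← coe_decompose_mul_add_of_right_mem 𝒜 (decompose 𝒜 q (n - i)).2]
    exact hJ _ (Submodule.mem_colon.1 hf _ (hp (n - i) hq))
  · exact J.zero_mem

/-- The components `f_i` are shown to vanish at `p` by induction on `i`, comparing components of
degree `e + i` in `g * f`. -/
theorem mem_localContraction_of_mul_mem [p.IsPrime] (hJ : J.IsHomogeneous 𝒜) {e : ℕ}
    (hgf : g * f ∈ J) (hlow : ∀ i < e, (decompose 𝒜 g i : A) * f ∈ J)
    (he : (decompose 𝒜 g e : A) ∉ p) : f ∈ localContraction J p := by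
  refine mem_of_forall_decompose_mem_s2 𝒜 fun i ↦ ?_
  induction i using Nat.strong_induction_on with
  | _ i ih =>
    have component : (∑ ab ∈ Finset.HasAntidiagonal.antidiagonal (e + i),
        (decompose 𝒜 g ab.1 : A) * decompose 𝒜 f ab.2) ∈ localContraction J p := by
      rw [← coe_mul_apply_eq_sum_antidiagonal, ← decompose_mul]
      exact le_localContraction (hJ _ hgf)
    have others : ∀ ab ∈ (Finset.HasAntidiagonal.antidiagonal (e + i)).erase (e, i),
        (decompose 𝒜 g ab.1 : A) * decompose 𝒜 f ab.2 ∈ localContraction J p := by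
      rintro ⟨a, b⟩ hab
      simp only [Finset.mem_erase, Prod.mk.injEq, ne_eq,
        Finset.HasAntidiagonal.mem_antidiagonal] at hab
      rcases lt_or_ge a e with ha | ha
      · rw [← coe_decompose_mul_add_of_left_mem 𝒜 (decompose 𝒜 g a).2]
        exact le_localContraction (hJ _ (hlow a ha))
      · exact Ideal.mul_mem_left _ _ (ih b (by omega))
    rw [← Finset.add_sum_erase _ _ (Finset.HasAntidiagonal.mem_antidiagonal.2 rfl : (e, i) ∈ _),
      Ideal.add_mem_iff_left _ (Ideal.sum_mem _ others)] at component
    exact (mul_mem_localContraction_iff he).1 component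

theorem isHomogeneous_of_colon_singleton_eq [p.IsPrime] (hJ : J.IsHomogeneous 𝒜)
    (h : J.colon {f} = p) : p.IsHomogeneous 𝒜 := by
  have mul_mem_iff (r : A) : r * f ∈ J ↔ r ∈ p := by rw [← h, Submodule.mem_colon_singleton]; rfl
  intro e g hg
  induction e using Nat.strong_induction_on with
  | _ e ih =>
    by_contra he
    exact (colon_singleton_eq_iff.1 h).2 (mem_localContraction_of_mul_mem hJ
      ((mul_mem_iff g).2 hg) (fun i hi ↦ (mul_mem_iff _).2 (ih i hi)) he)

theorem exists_homogeneous_colon_singleton_eq_s2 [p.IsPrime] (hJ : J.IsHomogeneous 𝒜)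
    (h : J.colon {f} = p) : ∃ d, ∃ f' ∈ 𝒜 d, J.colon {f'} = p := by
  obtain ⟨hfC, hfL⟩ := colon_singleton_eq_iff.1 h
  obtain ⟨d, hd⟩ := not_forall.1 (mt (mem_of_forall_decompose_mem_s2 𝒜) hfL)
  have hC := isHomogeneous_colon hJ (isHomogeneous_of_colon_singleton_eq hJ h)
  exact ⟨d, _, (decompose 𝒜 f d).2, colon_singleton_eq_iff.2 ⟨hC d hfC, hd⟩⟩

end HomogeneousIdeal

section GeneratorDegrees

open DirectSum

variable {A τ : Type*} [CommRing A] [SetLike τ A] {𝒜 : ℕ → τ} {I C N p : Ideal A} {d D e k : ℕ}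
  {f : A}

variable (𝒜) in
/-- The ideal `I` is generated by homogeneous elements of degree `d`, i.e. it is equigenerated. -/
def IsGeneratedInDegree (I : Ideal A) (d : ℕ) : Prop :=
  ∃ s ⊆ (𝒜 d : Set A), I = Ideal.span s

variable (𝒜) in
/-- The ideal `C` is generated by homogeneous elements of degree at most `D`. For `C = (J : p)` such
a `D` bounds the v-number `v_p(J)`. -/
def IsGeneratedInDegreesLE (C : Ideal A) (D : ℕ) : Prop :=
  ∃ s : Set A, (∀ t ∈ s, ∃ m ≤ D, t ∈ 𝒜 m) ∧ C = Ideal.span s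

theorem IsGeneratedInDegreesLE.mono (hC : IsGeneratedInDegreesLE 𝒜 C D) (h : D ≤ e) :
    IsGeneratedInDegreesLE 𝒜 C e := by
  obtain ⟨s, hs, rfl⟩ := hC
  exact ⟨s, fun t ht ↦ (hs t ht).imp fun m hm ↦ ⟨hm.1.trans h, hm.2⟩, rfl⟩

variable [AddSubmonoidClass τ A] [GradedRing 𝒜]

theorem IsGeneratedInDegree.isHomogeneous (hI : IsGeneratedInDegree 𝒜 I d) :
    I.IsHomogeneous 𝒜 := by
  obtain ⟨s, hs, rfl⟩ := hI
  exact Ideal.homogeneous_span 𝒜 s fun t ht ↦ ⟨d, hs ht⟩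

open scoped Pointwise in
theorem IsGeneratedInDegree.mul (hI : IsGeneratedInDegree 𝒜 I d)
    (hC : IsGeneratedInDegreesLE 𝒜 C D) : IsGeneratedInDegreesLE 𝒜 (I * C) (d + D) := by
  obtain ⟨s, hs, rfl⟩ := hI
  obtain ⟨t, ht, rfl⟩ := hC
  refine ⟨s * t, ?_, Ideal.span_mul_span' s t⟩
  rintro _ ⟨a, ha, c, hc, rfl⟩
  obtain ⟨m, hm, hcm⟩ := ht c hc
  exact ⟨d + m, by gcongr, SetLike.mul_mem_graded (hs ha) hcm⟩

theorem exists_isGeneratedInDegreesLE [IsNoetherianRing A] (hC : C.IsHomogeneous 𝒜) :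
    ∃ D, IsGeneratedInDegreesLE 𝒜 C D := by
  obtain ⟨s, rfl⟩ := (Ideal.IsHomogeneous.iff_exists 𝒜 C).1 hC
  obtain ⟨t, hts, ht⟩ := (Submodule.fg_span_iff_fg_span_finset_subset _).1
    (IsNoetherian.noetherian (Ideal.span ((↑) '' s : Set A)))
  have homogeneous : ∀ c ∈ t, ∃ m, c ∈ 𝒜 m := fun c hc ↦ by
    obtain ⟨c, -, rfl⟩ := hts hc
    exact c.2
  have bounded : ∀ᶠ D in atTop, ∀ c ∈ t, ∃ m ≤ D, c ∈ 𝒜 m :=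
    (eventually_all_finset t).2 fun c hc ↦ by
      obtain ⟨m, hm⟩ := homogeneous c hc
      exact (eventually_ge_atTop m).mono fun D hD ↦ ⟨m, hD, hm⟩
  obtain ⟨D, hD⟩ := bounded.exists
  exact ⟨D, t, hD, ht⟩

theorem decompose_mem_of_mem_span_mul {s : Set A} (hs : s ⊆ 𝒜 d) (hC : C.IsHomogeneous 𝒜)
    (hN : ∀ j, j + d = e → ∀ a ∈ s, ∀ c ∈ C, c ∈ 𝒜 j → a * c ∈ N) (hf : f ∈ Ideal.span s * C) :
    (decompose 𝒜 f e : A) ∈ N := by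
  refine Submodule.mul_induction_on hf (fun a ha ↦ ?_) fun x y hx hy ↦ ?_
  · induction ha using Submodule.span_induction with
    | mem a ha =>
      intro c hc
      rw [coe_decompose_mul_of_left_mem 𝒜 e (hs ha)]
      split_ifs with hde
      · exact hN _ (Nat.sub_add_cancel hde) a ha _ (hC _ hc) (decompose 𝒜 c _).2
      · exact N.zero_mem
    | zero => exact fun c _ ↦ by rw [zero_mul, decompose_zero]; exact N.zero_mem
    | add x y _ _ hx hy =>
      intro c hc
      rw [add_mul, decompose_add, DirectSum.add_apply, AddMemClass.coe_add]
      exact N.add_mem (hx c hc) (hy c hc)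
    | smul r a _ ha =>
      intro c hc
      rw [smul_eq_mul, mul_comm r, mul_assoc]
      exact ha _ (C.mul_mem_left r hc)
  · rw [decompose_add, DirectSum.add_apply, AddMemClass.coe_add]
    exact N.add_mem hx hy

theorem IsGeneratedInDegree.exists_mul_notMem (hI : IsGeneratedInDegree 𝒜 I d)
    (hC : C.IsHomogeneous 𝒜) (hf : f ∈ I * C) (hfe : f ∈ 𝒜 e) (hfN : f ∉ N) :
    ∃ j, j + d = e ∧ ∃ a ∈ I, ∃ c ∈ C, c ∈ 𝒜 j ∧ a * c ∉ N := by
  obtain ⟨s, hs, rfl⟩ := hI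
  contrapose! hfN
  rw [← decompose_of_mem_same 𝒜 hfe]
  exact decompose_mem_of_mem_span_mul hs hC
    (fun j hj a ha ↦ hfN j hj a (Ideal.subset_span ha)) hf

theorem eventually_isGeneratedInDegreesLE_colon_pow [IsNoetherianRing A]
    (hI : IsGeneratedInDegree 𝒜 I d) (hp : p.IsHomogeneous 𝒜)
    (hreg : ∃ a ∈ p, a ∈ nonZeroDivisors A) :
    ∃ D, ∀ᶠ k : ℕ in atTop, IsGeneratedInDegreesLE 𝒜 ((I ^ k).colon (p : Set A)) (D + d * k) := by
  obtain ⟨k₀, hk₀⟩ := eventually_atTop.1 (eventually_colon_pow_succ_eq (I := I) hreg)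
  obtain ⟨D, hD⟩ := exists_isGeneratedInDegreesLE
    (isHomogeneous_colon (isHomogeneous_pow hI.isHomogeneous k₀) hp)
  refine ⟨D, eventually_atTop.2 ⟨k₀, fun k hk ↦ ?_⟩⟩
  induction k, hk using Nat.le_induction with
  | base => exact hD.mono (Nat.le_add_right _ _)
  | succ k hk ih =>
    rw [hk₀ k hk]
    exact (hI.mul ih).mono (by linarith)

end GeneratorDegrees

section VNumber

variable {A τ : Type*} [CommRing A] [SetLike τ A] {𝒜 : ℕ → τ} {I J p : Ideal A} {d D k : ℕ}
  {f : A}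

variable (𝒜) in
/-- The v-number `v_p(J)` of an ideal of a graded ring at a prime `p`, i.e. the least degree of a
homogeneous `f` with `(J : f) = p`. -/
def gradedVNumberAt (J p : Ideal A) : ℕ :=
  sInf {d | ∃ f ∈ 𝒜 d, J.colon {f} = p}

variable (𝒜) in
/-- The v-number `v(J)` of an ideal of a graded ring, i.e. the least degree of a homogeneous `f`
with `(J : f) ∈ Ass(J)`. -/
def gradedVNumber (J : Ideal A) : ℕ :=
  sInf {d | ∃ f ∈ 𝒜 d, J.colon {f} ∈ associatedPrimes A (A ⧸ J)}

variable (𝒜) in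
/-- The initial degree `α(I)` of an ideal of a graded ring, i.e. the least degree of a nonzero
homogeneous element. It is `0` for `I = ⊥`. -/
def gradedInitialDegree (I : Ideal A) : ℕ :=
  sInf {d | ∃ f ∈ I, f ≠ 0 ∧ f ∈ 𝒜 d}

theorem gradedVNumberAt_le_of_colon_eq (hf : f ∈ 𝒜 d) (h : J.colon {f} = p) :
    gradedVNumberAt 𝒜 J p ≤ d :=
  Nat.sInf_le ⟨f, hf, h⟩

theorem gradedInitialDegree_bot : gradedInitialDegree 𝒜 (⊥ : Ideal A) = 0 := by
  refine Nat.sInf_eq_zero.2 (.inr (Set.eq_empty_of_forall_notMem ?_))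
  rintro d ⟨f, hf, hf0, -⟩
  exact hf0 hf

theorem IsGeneratedInDegreesLE.gradedVNumberAt_le [IsNoetherianRing A]
    (hp : p ∈ associatedPrimes A (A ⧸ J))
    (hD : IsGeneratedInDegreesLE 𝒜 (J.colon (p : Set A)) D) : gradedVNumberAt 𝒜 J p ≤ D := by
  obtain ⟨_, f, hf⟩ := mem_associatedPrimes_quotient_iff.1 hp
  obtain ⟨hfC, hfL⟩ := colon_singleton_eq_iff.1 hf
  obtain ⟨s, hs, hsC⟩ := hD
  have not_subset : ¬ s ⊆ localContraction J p := fun h ↦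
    hfL (Ideal.span_le.2 h (hsC ▸ hfC))
  obtain ⟨t, hts, htL⟩ := Set.not_subset.1 not_subset
  obtain ⟨m, hmD, htm⟩ := hs t hts
  have htC : t ∈ J.colon (p : Set A) := hsC ▸ Ideal.subset_span hts
  exact (gradedVNumberAt_le_of_colon_eq htm (colon_singleton_eq_iff.2 ⟨htC, htL⟩)).trans hmD

variable [AddSubmonoidClass τ A] [GradedRing 𝒜]

theorem gradedInitialDegree_eq (hI : IsGeneratedInDegree 𝒜 I d) (hbot : I ≠ ⊥) :
    gradedInitialDegree 𝒜 I = d := by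
  refine IsLeast.csInf_eq ⟨?_, ?_⟩
  · obtain ⟨s, hs, rfl⟩ := hI
    obtain ⟨f, hf, hf0⟩ := by simpa only [ne_eq, Ideal.span_eq_bot, not_forall] using hbot
    exact ⟨f, Ideal.subset_span hf, hf0, hs hf⟩
  · rintro e ⟨f, hf, hf0, hfe⟩
    obtain ⟨j, rfl, -⟩ := hI.exists_mul_notMem (Ideal.IsHomogeneous.top 𝒜)
      (by rwa [Ideal.mul_top]) hfe (mt Ideal.mem_bot.1 hf0)
    exact Nat.le_add_left _ _

variable [IsNoetherianRing A]

theorem exists_mem_gradedVNumberAt (hJ : J.IsHomogeneous 𝒜)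
    (hp : p ∈ associatedPrimes A (A ⧸ J)) : ∃ f ∈ 𝒜 (gradedVNumberAt 𝒜 J p), J.colon {f} = p := by
  obtain ⟨_, f, hf⟩ := mem_associatedPrimes_quotient_iff.1 hp
  exact Nat.sInf_mem (exists_homogeneous_colon_singleton_eq_s2 hJ hf)

theorem isLeast_gradedVNumber (hJ : J.IsHomogeneous 𝒜) (htop : J ≠ ⊤) :
    IsLeast (gradedVNumberAt 𝒜 J '' associatedPrimes A (A ⧸ J)) (gradedVNumber 𝒜 J) := by
  have le_gradedVNumberAt : ∀ p ∈ associatedPrimes A (A ⧸ J),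
      gradedVNumber 𝒜 J ≤ gradedVNumberAt 𝒜 J p := fun p hp ↦ by
    obtain ⟨f, hf, hfp⟩ := exists_mem_gradedVNumberAt hJ hp
    exact Nat.sInf_le ⟨f, hf, hfp.symm ▸ hp⟩
  have : Nontrivial (A ⧸ J) := Ideal.Quotient.nontrivial_iff.2 htop
  obtain ⟨p, hp⟩ := associatedPrimes.nonempty A (A ⧸ J)
  obtain ⟨f, hf, hfp⟩ := exists_mem_gradedVNumberAt hJ hp
  have degrees_nonempty : {d | ∃ f ∈ 𝒜 d, J.colon {f} ∈ associatedPrimes A (A ⧸ J)}.Nonempty :=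
    ⟨_, f, hf, hfp.symm ▸ hp⟩
  obtain ⟨g, hg, hgJ⟩ := Nat.sInf_mem degrees_nonempty
  exact ⟨⟨_, hgJ, (gradedVNumberAt_le_of_colon_eq hg rfl).antisymm (le_gradedVNumberAt _ hgJ)⟩,
    Set.forall_mem_image.2 le_gradedVNumberAt⟩

theorem gradedVNumberAt_add_le (hI : IsGeneratedInDegree 𝒜 I d)
    (hC : (I ^ (k + 1)).colon p ≤ I * (I ^ k).colon p)
    (hp : p ∈ associatedPrimes A (A ⧸ I ^ (k + 1))) :
    gradedVNumberAt 𝒜 (I ^ k) p + d ≤ gradedVNumberAt 𝒜 (I ^ (k + 1)) p := by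
  have hIk (m : ℕ) := isHomogeneous_pow hI.isHomogeneous m
  have : p.IsPrime := hp.1
  obtain ⟨f, hf, hfp⟩ := exists_mem_gradedVNumberAt (hIk (k + 1)) hp
  obtain ⟨hfC, hfL⟩ := colon_singleton_eq_iff.1 hfp
  have colon_homogeneous :=
    isHomogeneous_colon (hIk k) (isHomogeneous_of_colon_singleton_eq (hIk (k + 1)) hfp)
  obtain ⟨j, hj, a, ha, c, hc, hcj, hac⟩ :=
    hI.exists_mul_notMem colon_homogeneous (hC hfC) hf hfL
  rw [← hj]
  exact Nat.add_le_add_right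
    (gradedVNumberAt_le_of_colon_eq hcj (colon_singleton_eq_of_mul_notMem ha hc hac)) d

theorem exists_eventually_gradedVNumberAt_eq_of_isGeneratedInDegree
    (hI : IsGeneratedInDegree 𝒜 I d) (hreg : ∃ a ∈ I, a ∈ nonZeroDivisors A)
    (hp : p ∈ stableAssociatedPrimes I) :
    ∃ b : ℤ, ∀ᶠ k : ℕ in atTop, (gradedVNumberAt 𝒜 (I ^ k) p : ℤ) = d * k + b := by
  have hp_succ : ∀ᶠ k : ℕ in atTop, p ∈ associatedPrimes A (A ⧸ I ^ (k + 1)) :=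
    (tendsto_add_atTop_nat 1).eventually hp
  obtain ⟨k, hk⟩ := hp_succ.exists
  obtain ⟨_, f, hf⟩ := mem_associatedPrimes_quotient_iff.1 hk
  have hp_hom := isHomogeneous_of_colon_singleton_eq (isHomogeneous_pow hI.isHomogeneous _) hf
  have hp_nzd : ∃ a ∈ p, a ∈ nonZeroDivisors A :=
    hreg.imp fun a ha ↦ ha.imp_left fun haI ↦ le_of_mem_associatedPrimes_pow hk haI
  obtain ⟨D, hD⟩ := eventually_isGeneratedInDegreesLE_colon_pow hI hp_hom hp_nzd
  refine exists_eventually_eq_mul_add (D := D) ?_ ?_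
  · filter_upwards [eventually_colon_pow_succ_eq hp_nzd, hp_succ] with k hC hpk using
      gradedVNumberAt_add_le hI hC.le hpk
  · filter_upwards [hD, hp] with k hDk hpk using hDk.gradedVNumberAt_le hpk

theorem exists_eventually_gradedVNumberAt_eq
    (hI : ∃ d, IsGeneratedInDegree 𝒜 I d) (hreg : I ≠ ⊥ → ∃ a ∈ I, a ∈ nonZeroDivisors A)
    (hp : p ∈ stableAssociatedPrimes I) :
    ∃ b : ℤ, ∀ᶠ k : ℕ in atTop,
      (gradedVNumberAt 𝒜 (I ^ k) p : ℤ) = gradedInitialDegree 𝒜 I * k + b := by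
  rcases eq_or_ne I ⊥ with rfl | hbot
  · refine ⟨gradedVNumberAt 𝒜 ⊥ p, ?_⟩
    filter_upwards [eventually_ne_atTop 0] with k hk
    rw [Ideal.bot_pow hk, gradedInitialDegree_bot, Nat.cast_zero, zero_mul, zero_add]
  · obtain ⟨d, hd⟩ := hI
    rw [gradedInitialDegree_eq hd hbot]
    exact exists_eventually_gradedVNumberAt_eq_of_isGeneratedInDegree hd (hreg hbot) hp

theorem stmt2_general (hI : ∃ d, IsGeneratedInDegree 𝒜 I d) (htop : I ≠ ⊤)
    (hreg : I ≠ ⊥ → ∃ a ∈ I, a ∈ nonZeroDivisors A) :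
    ∃ bp : Ideal A → ℤ,
      (∀ p ∈ stableAssociatedPrimes I, ∀ᶠ k : ℕ in atTop,
        (gradedVNumberAt 𝒜 (I ^ k) p : ℤ) = gradedInitialDegree 𝒜 I * k + bp p) ∧
      ∃ b : ℤ, IsLeast (bp '' stableAssociatedPrimes I) b ∧ ∀ᶠ k : ℕ in atTop,
        (gradedVNumber 𝒜 (I ^ k) : ℤ) = gradedInitialDegree 𝒜 I * k + b := by
  choose! bp hbp using fun p ↦ exists_eventually_gradedVNumberAt_eq (p := p) hI hreg
  obtain ⟨d, hd⟩ := hI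
  have least : ∀ᶠ k : ℕ in atTop, IsLeast (gradedVNumberAt 𝒜 (I ^ k) '' stableAssociatedPrimes I)
      (gradedVNumber 𝒜 (I ^ k)) := by
    filter_upwards [eventually_associatedPrimes_pow_eq hreg, eventually_ne_atTop 0] with k hAss hk
    rw [← hAss]
    exact isLeast_gradedVNumber (isHomogeneous_pow hd.isHomogeneous k)
      (Ideal.pow_eq_top_iff.not.2 (not_or.2 ⟨htop, hk⟩))
  obtain ⟨k, hk⟩ := least.exists
  obtain ⟨p₀, hp₀, hmin⟩ :=
    Set.exists_min_image _ bp finite_stableAssociatedPrimes hk.nonempty.of_image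
  refine ⟨bp, hbp, bp p₀, ⟨⟨p₀, hp₀, rfl⟩, Set.forall_mem_image.2 hmin⟩, ?_⟩
  filter_upwards [least, (eventually_all_finite finite_stableAssociatedPrimes).2 hbp] with k hk hv
  obtain ⟨q, hq, hqv⟩ := hk.1
  have upper : gradedVNumber 𝒜 (I ^ k) ≤ gradedVNumberAt 𝒜 (I ^ k) p₀ := hk.2 ⟨p₀, hp₀, rfl⟩
  refine le_antisymm ?_ ?_
  · rw [← hv p₀ hp₀]
    exact_mod_cast upper
  · rw [← hqv, hv q hq]
    exact add_le_add_right (hmin q hq) _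

end VNumber

attribute [local instance] MvPolynomial.gradedAlgebra

theorem vNumberAt_eq_gradedVNumberAt {σ : Type*} (I p : Ideal (MvPolynomial σ K)) :
    vNumberAt K I p = gradedVNumberAt (homogeneousSubmodule σ K) I p := by
  simp only [vNumberAt, gradedVNumberAt, Submodule.colon_span, Ideal.span]
  rfl

theorem vNumber_eq_gradedVNumber {σ : Type*} (I : Ideal (MvPolynomial σ K)) :
    vNumber K I = gradedVNumber (homogeneousSubmodule σ K) I := by
  simp only [vNumber, gradedVNumber, Submodule.colon_span, Ideal.span]
  rfl

theorem stablePrimes_eq_stableAssociatedPrimes {σ : Type*} (I : Ideal (MvPolynomial σ K)) :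
    stablePrimes K I = stableAssociatedPrimes I :=
  Set.ext fun _ ↦ eventually_atTop.symm

/-- For a graded ideal `I` generated in a single degree: (a) for every stable prime `p`
there is an integer `b_p` with `v_p(I^k) = α(I)·k + b_p` for `k ≫ 0`, and (b)
`v(I^k) = α(I)·k + b` for `k ≫ 0`, where `b` is the minimum of the `b_p`. -/
theorem stmt2 {n : ℕ} (I : Ideal (MvPolynomial (Fin n) K))
    (hI : Equigenerated K I) (hI' : I ≠ ⊤) :
    ∃ bp : Ideal (MvPolynomial (Fin n) K) → ℤ,
      (∀ p ∈ stablePrimes K I, ∃ N : ℕ, ∀ k : ℕ, N ≤ k →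
        (vNumberAt K (I ^ k) p : ℤ) = (initialDegree K I : ℤ) * k + bp p) ∧
      ∃ b : ℤ, IsLeast (bp '' stablePrimes K I) b ∧
        ∃ N : ℕ, ∀ k : ℕ, N ≤ k →
          (vNumber K (I ^ k) : ℤ) = (initialDegree K I : ℤ) * k + b := by
  simp only [← eventually_atTop, vNumberAt_eq_gradedVNumberAt, vNumber_eq_gradedVNumber,
    stablePrimes_eq_stableAssociatedPrimes]
  exact stmt2_general hI hI' fun hbot ↦
    (Submodule.exists_mem_ne_zero_of_ne_bot hbot).imp fun _ ha ↦
      ha.imp_right mem_nonZeroDivisors_of_ne_zero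

end
end

section
/- Let I be an ideal generated by a fixed set of monomials in the variables x_1,...,x_n, regarded as an ideal of K[x_1,...,x_n] for a field K. Then the functions k ↦ v_p(I^k) for each stable prime p of I (for k ≫ 0), and the function k ↦ v(I^k) for k ≥ 1, do not depend on the field K; that is, if the same monomials are used to generate an ideal over two different fields, the corresponding v-functions agree. -/
open MvPolynomial

noncomputable section

variable (K : Type*) [Field K]

/-!
Let `I` be a monomial ideal and `f` a polynomial. A prime `(I : f)` is generated by variables: if
`g * f ∈ I`, the sums of the exponents of `g` and those of `f` include one attained only once, so
some product of a term of `g` with a term of `f` lies in `I`; cancelling that term of `f` and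
repeating, some product of terms of `g` multiplies `f` into `I`, hence some term of `g` lies in the
prime. Moreover `(I : f)` contains the intersection of the `(I : x ^ m)` over the exponents `m` of
`f`, so if `(I : f)` is the prime `P_B` generated by the variables `x_i`, `i ∈ B`, then it contains,
and hence equals, one of the `(I : x ^ m)`; likewise for `√(I : f)`. Thus only monomials `f` matter
in the definitions of the associated primes and the v-numbers, and whether `(I : x ^ m)` or its
radical equals `P_B` is a condition on exponents that does not mention the field.
-/

section CommSemiring

open scoped Pointwise

variable (R : Type*) [CommSemiring R] {σ : Type*}

/-- The monomial ideal generated by the monomials with exponents in `A`. -/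
def monomialIdeal (A : Set (σ →₀ ℕ)) : Ideal (MvPolynomial σ R) :=
  Ideal.span ((fun m => (monomial m (1 : R) : MvPolynomial σ R)) '' A)

/-- The ideal `P_B` generated by the variables with index in `B`. Over a domain, these are the
monomial primes. -/
def variableIdeal (B : Set σ) : Ideal (MvPolynomial σ R) :=
  Ideal.span ((fun i => (X i : MvPolynomial σ R)) '' B)

variable {R} {A : Set (σ →₀ ℕ)} {B : Set σ} {f : MvPolynomial σ R}

theorem mem_monomialIdeal : f ∈ monomialIdeal R A ↔ ∀ s ∈ f.support, ∃ a ∈ A, a ≤ s :=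
  mem_ideal_span_monomial_image

theorem mem_variableIdeal : f ∈ variableIdeal R B ↔ ∀ s ∈ f.support, ∃ i ∈ B, s i ≠ 0 :=
  mem_ideal_span_X_image

theorem monomial_mem_monomialIdeal [Nontrivial R] {s : σ →₀ ℕ} :
    monomial s (1 : R) ∈ monomialIdeal R A ↔ ∃ a ∈ A, a ≤ s := by
  classical
  simp [mem_monomialIdeal, support_monomial]

theorem monomial_mem_monomialIdeal_of_mem_support (hf : f ∈ monomialIdeal R A) {s : σ →₀ ℕ}
    (hs : s ∈ f.support) (r : R) : monomial s r ∈ monomialIdeal R A :=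
  mem_monomialIdeal.2 fun _ ht =>
    Finset.mem_singleton.1 (support_monomial_subset ht) ▸ mem_monomialIdeal.1 hf s hs

theorem variableIdeal_le_iff {J : Ideal (MvPolynomial σ R)} :
    variableIdeal R B ≤ J ↔ ∀ i ∈ B, X i ∈ J := by
  simp only [variableIdeal, Ideal.span_le, Set.image_subset_iff]
  rfl

theorem monomial_mul_monomial_mem_of_monomial_mul_mem {u m : σ →₀ ℕ}
    (h : monomial u 1 * f ∈ monomialIdeal R A) (hm : m ∈ f.support) :
    monomial u 1 * monomial m 1 ∈ monomialIdeal R A := by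
  have hum : u + m ∈ (monomial u 1 * f).support := by
    rw [mem_support_iff, coeff_monomial_mul, one_mul]
    exact mem_support_iff.1 hm
  rw [monomial_mul]
  exact monomial_mem_monomialIdeal_of_mem_support h hum _

theorem card_support_monomial_mul_le (u : σ →₀ ℕ) (r : R) (f : MvPolynomial σ R) :
    (monomial u r * f).support.card ≤ f.support.card := by
  classical
  calc (monomial u r * f).support.card
      ≤ ((monomial u r).support + f.support).card := Finset.card_le_card (support_mul _ _)
    _ ≤ ({u} + f.support).card :=
      Finset.card_le_card (Finset.add_subset_add_right support_monomial_subset)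
    _ = f.support.card := Finset.card_singleton_add _ _

theorem monomialIdeal_mul (A A' : Set (σ →₀ ℕ)) :
    monomialIdeal R A * monomialIdeal R A' = monomialIdeal R (A + A') := by
  simp only [monomialIdeal, Ideal.span_mul_span']
  congr 1
  exact (Set.image_image2_distrib fun a b => by rw [monomial_mul, one_mul]).symm

theorem monomialIdeal_pow (A : Set (σ →₀ ℕ)) (k : ℕ) :
    monomialIdeal R A ^ k = monomialIdeal R ((· + A)^[k] 0) := by
  induction k with
  | zero => simp [monomialIdeal, Ideal.one_eq_top]
  | succ k ih => rw [pow_succ, ih, monomialIdeal_mul, Function.iterate_succ_apply']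

end CommSemiring

section CommRing

variable {R : Type*} [CommRing R] {σ : Type*} {A : Set (σ →₀ ℕ)} {B : Set σ}
  {f g : MvPolynomial σ R}

theorem support_sub_monomial_coeff [DecidableEq σ] (f : MvPolynomial σ R) (s : σ →₀ ℕ) :
    (f - monomial s (coeff s f)).support = f.support.erase s := by
  ext t
  by_cases h : s = t <;> simp [h, eq_comm]

theorem card_support_sub_monomial_coeff_lt {s : σ →₀ ℕ} (hs : s ∈ f.support) :
    (f - monomial s (coeff s f)).support.card < f.support.card := by
  classical
  rw [support_sub_monomial_coeff]
  exact Finset.card_erase_lt_of_mem hs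

theorem inf_colon_monomial_le_colon (I : Ideal (MvPolynomial σ R)) (f : MvPolynomial σ R) :
    f.support.inf (fun m => I.colon (Ideal.span {monomial m (1 : R)})) ≤
      I.colon (Ideal.span {f}) := by
  intro g hg
  simp only [Submodule.mem_finsetInf, Ideal.mem_colon_span_singleton] at hg ⊢
  rw [f.as_sum, Finset.mul_sum]
  refine Ideal.sum_mem _ fun m hm => ?_
  have hterm : g * monomial m (coeff m f) = C (coeff m f) * (g * monomial m 1) := by
    rw [mul_left_comm, C_mul_monomial, mul_one]
  rw [hterm]
  exact Ideal.mul_mem_left _ _ (hg m hm)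

theorem exists_colon_monomial_le {I p : Ideal (MvPolynomial σ R)} (hp : p.IsPrime)
    (h : I.colon (Ideal.span {f}) ≤ p) :
    ∃ m ∈ f.support, I.colon (Ideal.span {monomial m (1 : R)}) ≤ p :=
  hp.inf_le'.1 ((inf_colon_monomial_le_colon I f).trans h)

theorem X_pow_mem_colon_monomial_of_mem_colon {i : σ} {r : ℕ} {m : σ →₀ ℕ}
    (h : X i ^ r ∈ (monomialIdeal R A).colon (Ideal.span {f})) (hm : m ∈ f.support) :
    X i ^ r ∈ (monomialIdeal R A).colon (Ideal.span {monomial m (1 : R)}) := by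
  rw [Ideal.mem_colon_span_singleton, X_pow_eq_monomial] at h ⊢
  exact monomial_mul_monomial_mem_of_monomial_mul_mem h hm

theorem X_pow_mem_colon_monomial_iff [Nontrivial R] {i : σ} {r : ℕ} {m : σ →₀ ℕ} :
    X i ^ r ∈ (monomialIdeal R A).colon (Ideal.span {monomial m (1 : R)}) ↔
      ∃ a ∈ A, a ≤ Finsupp.single i r + m := by
  rw [Ideal.mem_colon_span_singleton, X_pow_eq_monomial, monomial_mul, one_mul,
    monomial_mem_monomialIdeal]

theorem colon_monomial_le_variableIdeal_iff [Nontrivial R] {m : σ →₀ ℕ} :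
    (monomialIdeal R A).colon (Ideal.span {monomial m (1 : R)}) ≤ variableIdeal R B ↔
      ∀ u : σ →₀ ℕ, (∃ a ∈ A, a ≤ u + m) → ∃ i ∈ B, u i ≠ 0 := by
  classical
  constructor
  · intro h u hu
    have hmem : monomial u (1 : R) ∈ variableIdeal R B := h <| by
      rwa [Ideal.mem_colon_span_singleton, monomial_mul, one_mul, monomial_mem_monomialIdeal]
    exact mem_variableIdeal.1 hmem u (by simp [support_monomial])
  · intro h g hg
    rw [Ideal.mem_colon_span_singleton] at hg
    refine mem_variableIdeal.2 fun u hu => h u (mem_monomialIdeal.1 hg _ ?_)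
    rw [mem_support_iff, coeff_mul_monomial, mul_one]
    exact mem_support_iff.1 hu

theorem colon_monomial_eq_variableIdeal_iff [Nontrivial R] {m : σ →₀ ℕ} :
    (monomialIdeal R A).colon (Ideal.span {monomial m (1 : R)}) = variableIdeal R B ↔
      (∀ u : σ →₀ ℕ, (∃ a ∈ A, a ≤ u + m) → ∃ i ∈ B, u i ≠ 0) ∧
        ∀ i ∈ B, ∃ a ∈ A, a ≤ Finsupp.single i 1 + m := by
  simp only [le_antisymm_iff, colon_monomial_le_variableIdeal_iff, variableIdeal_le_iff,
    ← X_pow_mem_colon_monomial_iff (R := R), pow_one]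

theorem isPrime_variableIdeal [IsDomain R] (B : Set σ) : (variableIdeal R B).IsPrime := by
  classical
  let kill : MvPolynomial σ R →ₐ[R] MvPolynomial σ R := aeval fun i => if i ∈ B then 0 else X i
  let quot := Ideal.Quotient.mkₐ R (variableIdeal R B)
  have quot_X {i : σ} (hi : i ∈ B) : quot (X i) = 0 :=
    Ideal.Quotient.eq_zero_iff_mem.2 (variableIdeal_le_iff.1 le_rfl i hi)
  have quot_kill : quot.comp kill = quot := by
    ext i
    by_cases hi : i ∈ B <;> simp [kill, hi, quot_X]
  have hker : variableIdeal R B = RingHom.ker kill := by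
    refine le_antisymm (variableIdeal_le_iff.2 fun i hi => by simp [kill, hi]) fun f hf => ?_
    have hquot : quot (kill f) = quot f := DFunLike.congr_fun quot_kill f
    rw [RingHom.mem_ker.1 hf, map_zero] at hquot
    exact Ideal.Quotient.eq_zero_iff_mem.1 hquot.symm
  rw [hker]
  exact RingHom.ker_isPrime _

theorem radical_colon_monomial_eq_variableIdeal_iff [IsDomain R] {m : σ →₀ ℕ} :
    ((monomialIdeal R A).colon (Ideal.span {monomial m (1 : R)})).radical = variableIdeal R B ↔
      (∀ u : σ →₀ ℕ, (∃ a ∈ A, a ≤ u + m) → ∃ i ∈ B, u i ≠ 0) ∧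
        ∀ i ∈ B, ∃ r, ∃ a ∈ A, a ≤ Finsupp.single i r + m := by
  simp only [le_antisymm_iff, (isPrime_variableIdeal B).radical_le_iff,
    colon_monomial_le_variableIdeal_iff, variableIdeal_le_iff, Ideal.mem_radical_iff,
    X_pow_mem_colon_monomial_iff]

theorem exists_colon_monomial_eq_variableIdeal [IsDomain R]
    (h : (monomialIdeal R A).colon (Ideal.span {f}) = variableIdeal R B) :
    ∃ m ∈ f.support,
      (monomialIdeal R A).colon (Ideal.span {monomial m (1 : R)}) = variableIdeal R B := by
  obtain ⟨m, hm, hle⟩ := exists_colon_monomial_le (isPrime_variableIdeal B) h.le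
  refine ⟨m, hm, hle.antisymm (variableIdeal_le_iff.2 fun i hi => ?_)⟩
  have hX := variableIdeal_le_iff.1 h.ge i hi
  rw [← pow_one (X i)] at hX ⊢
  exact X_pow_mem_colon_monomial_of_mem_colon hX hm

theorem exists_radical_colon_monomial_eq_variableIdeal [IsDomain R]
    (h : ((monomialIdeal R A).colon (Ideal.span {f})).radical = variableIdeal R B) :
    ∃ m ∈ f.support,
      ((monomialIdeal R A).colon (Ideal.span {monomial m (1 : R)})).radical =
        variableIdeal R B := by
  have hprime := isPrime_variableIdeal (R := R) B
  obtain ⟨m, hm, hle⟩ := exists_colon_monomial_le hprime (Ideal.le_radical.trans h.le)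
  refine ⟨m, hm, (hprime.radical_le_iff.2 hle).antisymm (variableIdeal_le_iff.2 fun i hi => ?_)⟩
  obtain ⟨r, hr⟩ := variableIdeal_le_iff.1 h.ge i hi
  exact ⟨r, X_pow_mem_colon_monomial_of_mem_colon hr hm⟩

theorem exists_monomial_mul_monomial_mem_monomialIdeal [NoZeroDivisors R] (hg : g ≠ 0)
    (hf : f ≠ 0) (hgf : g * f ∈ monomialIdeal R A) :
    ∃ a ∈ g.support, ∃ b ∈ f.support, ∀ r s : R,
      monomial a r * monomial b s ∈ monomialIdeal R A := by
  obtain ⟨a, ha, b, hb, hunique⟩ := UniqueSums.uniqueAdd_of_nonempty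
    (support_nonempty.2 hg) (support_nonempty.2 hf)
  have hcoeff : coeff (a + b) (g * f) = coeff a g * coeff b f :=
    AddMonoidAlgebra.coeff_mul_add_of_uniqueAdd hunique
  have hab : a + b ∈ (g * f).support := by
    rw [mem_support_iff, hcoeff]
    exact mul_ne_zero (mem_support_iff.1 ha) (mem_support_iff.1 hb)
  refine ⟨a, ha, b, hb, fun r s => ?_⟩
  rw [monomial_mul]
  exact monomial_mem_monomialIdeal_of_mem_support hgf hab _

theorem exists_notMem_mul_mem_monomialIdeal [NoZeroDivisors R] {p : Ideal (MvPolynomial σ R)}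
    (hp : p.IsPrime) (hg : g ≠ 0) (hgp : ∀ a ∈ g.support, monomial a (1 : R) ∉ p)
    (hgf : g * f ∈ monomialIdeal R A) : ∃ h ∉ p, h * f ∈ monomialIdeal R A := by
  induction hc : f.support.card using Nat.strong_induction_on generalizing f with
  | _ c ih =>
  subst hc
  by_cases hf : f = 0
  · exact ⟨1, hp.one_notMem, by simp [hf]⟩
  obtain ⟨a, ha, b, hb, hab⟩ := exists_monomial_mul_monomial_mem_monomialIdeal hg hf hgf
  set xa : MvPolynomial σ R := monomial a 1
  set t : MvPolynomial σ R := monomial b (coeff b f)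
  have hxt : xa * t ∈ monomialIdeal R A := hab _ _
  have hrest : g * (xa * (f - t)) ∈ monomialIdeal R A := by
    convert sub_mem (Ideal.mul_mem_left _ xa hgf) (Ideal.mul_mem_left _ g hxt) using 1
    ring
  obtain ⟨h, hhp, hh⟩ := ih _ ((card_support_monomial_mul_le _ _ _).trans_lt
    (card_support_sub_monomial_coeff_lt hb)) hrest rfl
  refine ⟨h * xa, hp.mul_notMem hhp (hgp a ha), ?_⟩
  convert add_mem hh (Ideal.mul_mem_left _ h hxt) using 1
  ring

theorem exists_monomial_mem_of_mem_colon [NoZeroDivisors R]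
    (hp : ((monomialIdeal R A).colon (Ideal.span {f})).IsPrime) (hg : g ≠ 0)
    (hgp : g ∈ (monomialIdeal R A).colon (Ideal.span {f})) :
    ∃ a ∈ g.support, monomial a (1 : R) ∈ (monomialIdeal R A).colon (Ideal.span {f}) := by
  by_contra! hmon
  obtain ⟨h, hhp, hh⟩ := exists_notMem_mul_mem_monomialIdeal hp hg hmon
    (Ideal.mem_colon_span_singleton.1 hgp)
  exact hhp (Ideal.mem_colon_span_singleton.2 hh)

theorem monomial_mem_colon_of_mem_support [NoZeroDivisors R]
    (hp : ((monomialIdeal R A).colon (Ideal.span {f})).IsPrime)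
    (hg : g ∈ (monomialIdeal R A).colon (Ideal.span {f})) {s : σ →₀ ℕ} (hs : s ∈ g.support) :
    monomial s (1 : R) ∈ (monomialIdeal R A).colon (Ideal.span {f}) := by
  classical
  induction hc : g.support.card using Nat.strong_induction_on generalizing g with
  | _ c ih =>
  subst hc
  obtain ⟨a, ha, hap⟩ := exists_monomial_mem_of_mem_colon hp (support_nonempty.1 ⟨s, hs⟩) hg
  by_cases hsa : s = a
  · exact hsa ▸ hap
  refine ih _ (card_support_sub_monomial_coeff_lt ha) (sub_mem hg ?_) ?_ rfl
  · rw [← mul_one (coeff a g), ← C_mul_monomial]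
    exact Ideal.mul_mem_left _ _ hap
  · rw [support_sub_monomial_coeff]
    exact Finset.mem_erase.2 ⟨hsa, hs⟩

theorem exists_colon_eq_variableIdeal [NoZeroDivisors R]
    (hp : ((monomialIdeal R A).colon (Ideal.span {f})).IsPrime) :
    ∃ B, (monomialIdeal R A).colon (Ideal.span {f}) = variableIdeal R B := by
  refine ⟨{i | X i ∈ (monomialIdeal R A).colon (Ideal.span {f})},
    le_antisymm (fun g hg => mem_variableIdeal.2 fun s hs => ?_)
      (variableIdeal_le_iff.2 fun _ => id)⟩
  have hmon := monomial_mem_colon_of_mem_support hp hg hs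
  rw [← prod_X_pow_eq_monomial] at hmon
  obtain ⟨i, hi, hXi⟩ := hp.prod_mem_iff.1 hmon
  exact ⟨i, hp.mem_of_pow_mem _ hXi, Finsupp.mem_support_iff.1 hi⟩

end CommRing

section Field

variable {K} {σ : Type*} {A : Set (σ →₀ ℕ)} {B : Set σ}

-- The radical cannot be dropped: for infinite `σ` the polynomial ring is not Noetherian, and
-- Mathlib's associated primes are the primes of the form `√(I : f)`.
theorem mem_assPrimes_iff {I p : Ideal (MvPolynomial σ K)} :
    p ∈ assPrimes K I ↔
      p.IsPrime ∧ ∃ f : MvPolynomial σ K, (I.colon (Ideal.span {f})).radical = p := by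
  have hcolon (f : MvPolynomial σ K) :
      (⊥ : Submodule (MvPolynomial σ K) (MvPolynomial σ K ⧸ I)).colon {Ideal.Quotient.mk I f} =
        I.colon (Ideal.span {f}) := by
    ext g
    rw [Submodule.mem_colon_singleton, Ideal.mem_colon_span_singleton, Submodule.mem_bot,
      ← Ideal.Quotient.eq_zero_iff_mem]
    rfl
  rw [assPrimes, AssociatedPrimes.mem_iff, IsAssociatedPrime, Submodule.isAssociatedPrime_def]
  simp only [Ideal.Quotient.mk_surjective.exists, hcolon, eq_comm]

theorem colon_mem_assPrimes_iff {I : Ideal (MvPolynomial σ K)} {f : MvPolynomial σ K} :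
    I.colon (Ideal.span {f}) ∈ assPrimes K I ↔ (I.colon (Ideal.span {f})).IsPrime :=
  mem_assPrimes_iff.trans (and_iff_left_of_imp fun hp => ⟨f, hp.radical⟩)

theorem variableIdeal_mem_assPrimes_monomialIdeal_iff :
    variableIdeal K B ∈ assPrimes K (monomialIdeal K A) ↔
      ∃ m : σ →₀ ℕ,
        ((monomialIdeal K A).colon (Ideal.span {monomial m (1 : K)})).radical =
          variableIdeal K B := by
  rw [mem_assPrimes_iff, and_iff_right (isPrime_variableIdeal B)]
  constructor
  · rintro ⟨f, hf⟩
    obtain ⟨m, -, hm⟩ := exists_radical_colon_monomial_eq_variableIdeal hf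
    exact ⟨m, hm⟩
  · rintro ⟨m, hm⟩
    exact ⟨_, hm⟩

theorem exists_isHomogeneous_colon_eq_variableIdeal_iff {d : ℕ} :
    (∃ f : MvPolynomial σ K, f.IsHomogeneous d ∧
      (monomialIdeal K A).colon (Ideal.span {f}) = variableIdeal K B) ↔
    ∃ m : σ →₀ ℕ, m.degree = d ∧
      (monomialIdeal K A).colon (Ideal.span {monomial m (1 : K)}) = variableIdeal K B := by
  constructor
  · rintro ⟨f, hf, hcolon⟩
    obtain ⟨m, hm, hmB⟩ := exists_colon_monomial_eq_variableIdeal hcolon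
    refine ⟨m, ?_, hmB⟩
    rw [Finsupp.degree_eq_weight_one]
    exact hf (mem_support_iff.1 hm)
  · rintro ⟨m, hm, hmB⟩
    exact ⟨_, isHomogeneous_monomial _ hm, hmB⟩

theorem vNumberAt_monomialIdeal_variableIdeal (A : Set (σ →₀ ℕ)) (B : Set σ) :
    vNumberAt K (monomialIdeal K A) (variableIdeal K B) =
      sInf {d | ∃ m : σ →₀ ℕ, m.degree = d ∧
        (monomialIdeal K A).colon (Ideal.span {monomial m (1 : K)}) = variableIdeal K B} := by
  simp only [vNumberAt, exists_isHomogeneous_colon_eq_variableIdeal_iff]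

theorem vNumber_monomialIdeal (A : Set (σ →₀ ℕ)) :
    vNumber K (monomialIdeal K A) =
      sInf {d | ∃ B, ∃ m : σ →₀ ℕ, m.degree = d ∧
        (monomialIdeal K A).colon (Ideal.span {monomial m (1 : K)}) = variableIdeal K B} := by
  have isPrime_iff (f : MvPolynomial σ K) :
      ((monomialIdeal K A).colon (Ideal.span {f})).IsPrime ↔
        ∃ B, (monomialIdeal K A).colon (Ideal.span {f}) = variableIdeal K B :=
    ⟨exists_colon_eq_variableIdeal, fun ⟨B, hB⟩ => hB ▸ isPrime_variableIdeal B⟩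
  simp only [vNumber, colon_mem_assPrimes_iff, isPrime_iff, ← exists_and_left,
    ← exists_isHomogeneous_colon_eq_variableIdeal_iff]
  exact congrArg sInf (Set.ext fun d => exists_comm)

end Field

theorem stmt4_general (L : Type*) [Field L] {σ : Type*} (A : Set (σ →₀ ℕ)) :
    (∀ k : ℕ, 1 ≤ k → vNumber K (monomialIdeal K A ^ k) = vNumber L (monomialIdeal L A ^ k)) ∧
    ∀ (B : Set σ) (k : ℕ),
      (variableIdeal K B ∈ assPrimes K (monomialIdeal K A ^ k) ↔
        variableIdeal L B ∈ assPrimes L (monomialIdeal L A ^ k)) ∧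
      (variableIdeal K B ∈ assPrimes K (monomialIdeal K A ^ k) →
        vNumberAt K (monomialIdeal K A ^ k) (variableIdeal K B) =
          vNumberAt L (monomialIdeal L A ^ k) (variableIdeal L B)) := by
  simp only [monomialIdeal_pow]
  refine ⟨fun k _ => ?_, fun B k => ⟨?_, fun _ => ?_⟩⟩
  · simp only [vNumber_monomialIdeal, colon_monomial_eq_variableIdeal_iff]
  · simp only [variableIdeal_mem_assPrimes_monomialIdeal_iff,
      radical_colon_monomial_eq_variableIdeal_iff]
  · simp only [vNumberAt_monomialIdeal_variableIdeal, colon_monomial_eq_variableIdeal_iff]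

/-- The v-functions of an ideal generated by a fixed set of monomials do not depend on the
base field: `v(I_K^k) = v(I_L^k)` for `k ≥ 1`, a monomial prime is stable for `I_K` iff it
is stable for `I_L`, and the corresponding local v-functions eventually agree. -/
theorem stmt4 (L : Type*) [Field L] {n : ℕ} (A : Set (Fin n →₀ ℕ))
    (IK : Ideal (MvPolynomial (Fin n) K)) (IL : Ideal (MvPolynomial (Fin n) L))
    (hK : IK = Ideal.span ((fun m => (monomial m (1 : K) : MvPolynomial (Fin n) K)) '' A))
    (hL : IL = Ideal.span ((fun m => (monomial m (1 : L) : MvPolynomial (Fin n) L)) '' A)) :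
    (∀ k : ℕ, 1 ≤ k → vNumber K (IK ^ k) = vNumber L (IL ^ k)) ∧
    (∀ B : Set (Fin n),
      (Ideal.span ((fun i => (X i : MvPolynomial (Fin n) K)) '' B) ∈ stablePrimes K IK ↔
        Ideal.span ((fun i => (X i : MvPolynomial (Fin n) L)) '' B) ∈ stablePrimes L IL) ∧
      (Ideal.span ((fun i => (X i : MvPolynomial (Fin n) K)) '' B) ∈ stablePrimes K IK →
        ∃ N : ℕ, ∀ k : ℕ, N ≤ k →
          vNumberAt K (IK ^ k) (Ideal.span ((fun i => (X i : MvPolynomial (Fin n) K)) '' B)) =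
          vNumberAt L (IL ^ k)
            (Ideal.span ((fun i => (X i : MvPolynomial (Fin n) L)) '' B)))) := by
  subst hK hL
  obtain ⟨hv, hp⟩ := stmt4_general K L A
  exact ⟨hv, fun B => ⟨exists_congr fun N => forall₂_congr fun k _ => (hp B k).1,
    fun ⟨N, hN⟩ => ⟨N, fun k hk => (hp B k).2 (hN k hk)⟩⟩⟩

end
end

section
/- Simon's conjecture is equivalent to the monomial Simon conjecture. That is, the following two statements are equivalent: (Simon) every squarefree monomial ideal I of S = K[x_1,...,x_n], generated in a single degree d with G(I) ⊆ G(I_{n,d}) and having linear quotients, can be extended to the squarefree Veronese ideal I_{n,d} by linear quotients; (monomial Simon) every monomial ideal I of S generated in a single degree d with G(I) ⊆ G(m^d) and having linear quotients can be extended to m^d by linear quotients, where m = (x_1,...,x_n). -/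
open MvPolynomial

noncomputable section

variable (K : Type*) [Field K]

/-- The monomial with exponent vector `m`. -/
def mon {σ : Type*} (m : σ →₀ ℕ) : MvPolynomial σ K := monomial m 1

/-- The degree of an exponent vector. -/
def mdeg {σ : Type*} (m : σ →₀ ℕ) : ℕ := m.sum fun _ e => e

/-- `U` is the minimal monomial generating set `G(I)` of the monomial ideal `I`. -/
def MinimalGens {σ : Type*} [DecidableEq σ] (I : Ideal (MvPolynomial σ K))
    (U : Finset (σ →₀ ℕ)) : Prop :=
  I = Ideal.span (mon K '' (U : Set (σ →₀ ℕ))) ∧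
    ∀ m ∈ U, mon K m ∉ Ideal.span (mon K '' ((U.erase m : Finset (σ →₀ ℕ)) : Set (σ →₀ ℕ)))

/-- An ideal generated by (a subset of the) variables. -/
def GenByVars {σ : Type*} (J : Ideal (MvPolynomial σ K)) : Prop :=
  ∃ B : Set σ, J = Ideal.span ((fun i => (X i : MvPolynomial σ K)) '' B)

/-- The monomial ideal `I` has linear quotients: its minimal monomial generating set can be
ordered `u_1, …, u_m` so that `(u_1, …, u_{j-1}) : u_j` is generated by variables for
`j = 2, …, m`. -/
def HasLinearQuotients {σ : Type*} [DecidableEq σ] (I : Ideal (MvPolynomial σ K)) : Prop :=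
  ∃ L : List (σ →₀ ℕ), L.Nodup ∧ MinimalGens K I L.toFinset ∧
    ∀ (j : ℕ) (hj : j < L.length), 0 < j →
      GenByVars K ((Ideal.span (mon K '' {m | m ∈ L.take j})).colon
        (Ideal.span {mon K (L.get ⟨j, hj⟩)}))

/-- The monomial ideal `I` can be extended by linear quotients by the set `V` of new
monomial generators (`V = G(J) \ G(I)`): `V` can be ordered `v_1, …, v_r` so that
`(I, v_1, …, v_{j-1}) : v_j` is generated by variables for all `j = 1, …, r`. -/
def ExtendsByLinQuots {σ : Type*} (I : Ideal (MvPolynomial σ K)) (V : Set (σ →₀ ℕ)) : Prop :=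
  ∃ L : List (σ →₀ ℕ), L.Nodup ∧ {m | m ∈ L} = V ∧
    ∀ (j : ℕ) (hj : j < L.length),
      GenByVars K ((I ⊔ Ideal.span (mon K '' {m | m ∈ L.take j})).colon
        (Ideal.span {mon K (L.get ⟨j, hj⟩)}))

/-!
For monomials, "the colon ideal is generated by variables" is a divisibility condition on exponent
vectors, so both conjectures are instances of one property `SimonProperty D` of a set `D` of
exponent vectors: every subset of `D` with linear quotients extends to `D` by linear quotients.
This property passes to the divisors in `D` of a fixed monomial, and taking the monomial
`x₁ ⋯ xₙ` turns the monomial conjecture into the squarefree one.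

Conversely, give every variable `d` copies, let `π` forget which copy was taken, and replace a set
of monomials of degree `d` by the set of all squarefree monomials that `π` maps into it. Linear
quotients lift: each new monomial contributes a fibre of `π`, which is adjoined in decreasing
lexicographic order. Simon's conjecture then extends the lifted set, and the first monomial it
adjoins maps to a monomial by which the original set can be extended. Repeat until all monomials of
degree `d` are reached.
-/

section LinearQuotients

variable {σ : Type*} {A B D : Set (σ →₀ ℕ)} {v : σ →₀ ℕ}

/-- The colon ideal `(A) : v` of the monomial ideal generated by `A` is generated by variables
(`genByVars_colon_iff`), in terms of exponent vectors: whenever `u ∈ A`, the monomial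
`u / gcd(u, v)` is divisible by a variable `x_l` with `x_l v ∈ (A)`. -/
def LinQuotStep (A : Set (σ →₀ ℕ)) (v : σ →₀ ℕ) : Prop :=
  ∀ u ∈ A, ∃ w ∈ A, ∃ l, v l < u l ∧ w ≤ v + Finsupp.single l 1

/-- `A` can be extended to `B` by linear quotients: monomials can be adjoined to `A` one at a time,
each with a colon ideal generated by variables, until `B` is reached. For `A = ∅` this says that `B`
is finite and has linear quotients. -/
def LinQuotExtends : Set (σ →₀ ℕ) → Set (σ →₀ ℕ) → Prop :=
  Relation.ReflTransGen fun A B => ∃ v, LinQuotStep A v ∧ B = insert v A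

/-- The assertion of Simon's conjecture for monomials taken from `D`: every subset of `D` that has
linear quotients can be extended to `D` by linear quotients. -/
def SimonProperty (D : Set (σ →₀ ℕ)) : Prop :=
  ∀ U ⊆ D, LinQuotExtends ∅ U → LinQuotExtends U D

lemma LinQuotStep.notMem (h : LinQuotStep A v) : v ∉ A := fun hv =>
  let ⟨_, _, _, hlt, _⟩ := h v hv
  lt_irrefl _ hlt

lemma LinQuotExtends.subset (h : LinQuotExtends A B) : A ⊆ B := by
  induction h with
  | refl => exact subset_rfl
  | tail _ hstep ih =>
    obtain ⟨v, -, rfl⟩ := hstep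
    exact ih.trans (Set.subset_insert v _)

lemma LinQuotStep.linQuotExtends (h : LinQuotStep A v) : LinQuotExtends A (insert v A) :=
  .single ⟨v, h, rfl⟩

lemma linQuotExtends_union_of_injective {ι : Type*} [LinearOrder ι] {f : (σ →₀ ℕ) → ι}
    (hf : f.Injective) (F : Finset (σ →₀ ℕ))
    (h : ∀ v ∈ F, LinQuotStep (A ∪ {u | u ∈ F ∧ f v < f u}) v) :
    LinQuotExtends A (A ∪ F) := by
  classical
  induction F using Finset.induction_on_min_value f with
  | empty =>
    rw [Finset.coe_empty, Set.union_empty]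
    exact .refl
  | insert v s hv hmin ih =>
    have hlt : ∀ u ∈ s, f v < f u := fun u hu =>
      (hmin u hu).lt_of_ne fun e => hv (hf e ▸ hu)
    have hs : LinQuotExtends A (A ∪ s) := ih fun w hw => by
      have above_w : {u | u ∈ insert v s ∧ f w < f u} = {u | u ∈ s ∧ f w < f u} := by grind
      simpa only [above_w] using h w (Finset.mem_insert_of_mem hw)
    have hstep : LinQuotStep (A ∪ s) v := by
      have above_v : {u | u ∈ insert v s ∧ f v < f u} = (s : Set (σ →₀ ℕ)) := by grind
      simpa only [above_v] using h v (Finset.mem_insert_self v s)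
    rw [Finset.coe_insert, Set.union_insert]
    exact hs.trans hstep.linQuotExtends

lemma LinQuotExtends.map {τ : Type*} {F : Set (σ →₀ ℕ) → Set (τ →₀ ℕ)} (h : LinQuotExtends A B)
    (hF : ∀ A v, LinQuotStep A v → LinQuotExtends (F A) (F (insert v A))) :
    LinQuotExtends (F A) (F B) := by
  induction h with
  | refl => exact .refl
  | tail _ hstep ih =>
    obtain ⟨v, hv, rfl⟩ := hstep
    exact ih.trans (hF _ v hv)

lemma simonProperty_of_forall_exists_linQuotStep (hD : D.Finite)
    (h : ∀ U ⊂ D, LinQuotExtends ∅ U → ∃ v ∈ D, LinQuotStep U v) : SimonProperty D := by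
  intro U hUD hU
  obtain ⟨M, ⟨hMD, hUM⟩, hmax⟩ :=
    (hD.finite_subsets.subset fun M hM => hM.1 :
      {M | M ⊆ D ∧ LinQuotExtends U M}.Finite).exists_maximal ⟨U, hUD, .refl⟩
  obtain rfl | hne := eq_or_ne M D
  · exact hUM
  · obtain ⟨v, hvD, hv⟩ := h M (hMD.ssubset_of_ne hne) (hU.trans hUM)
    have hle := hmax ⟨Set.insert_subset hvD hMD, hUM.trans hv.linQuotExtends⟩
      (Set.subset_insert v M)
    exact absurd (hle (Set.mem_insert v M)) hv.notMem

end LinearQuotients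

section Lists

variable {σ : Type*} {A B : Set (σ →₀ ℕ)}

lemma forall_take_getElem_concat {α : Type*} (P : List α → α → Prop) (L : List α) (a : α) :
    (∀ (j : ℕ) (hj : j < (L ++ [a]).length), P ((L ++ [a]).take j) (L ++ [a])[j]) ↔
      (∀ (j : ℕ) (hj : j < L.length), P (L.take j) L[j]) ∧ P L a := by
  constructor
  · refine fun h => ⟨fun j hj => ?_, by simpa using h L.length (by simp)⟩
    have hj' : j < (L ++ [a]).length := by rw [List.length_append]; omega
    simpa only [List.take_append_of_le_length hj.le, List.getElem_append_left hj] using h j hj'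
  · rintro ⟨h, ha⟩ j hj
    rcases (Nat.le_of_lt_succ (by simpa using hj)).lt_or_eq with hj | rfl
    · simpa [List.take_append_of_le_length hj.le, List.getElem_append_left hj] using h j hj
    · simpa using ha

lemma setOf_mem_concat {α : Type*} (L : List α) (a : α) :
    {m | m ∈ L ++ [a]} = insert a {m | m ∈ L} := by
  ext m
  simp [or_comm]

lemma linQuotExtends_of_list (L : List (σ →₀ ℕ))
    (h : ∀ (j : ℕ) (hj : j < L.length), LinQuotStep (A ∪ {m | m ∈ L.take j}) L[j]) :
    LinQuotExtends A (A ∪ {m | m ∈ L}) := by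
  induction L using List.reverseRecOn with
  | nil =>
    simp only [List.not_mem_nil, Set.ofPred_false, Set.union_empty]
    exact .refl
  | append_singleton L v ih =>
    obtain ⟨hL, hv⟩ :=
      (forall_take_getElem_concat (fun T u => LinQuotStep (A ∪ {m | m ∈ T}) u) L v).1 h
    rw [setOf_mem_concat, Set.union_insert]
    exact (ih hL).trans hv.linQuotExtends

lemma LinQuotExtends.exists_list (h : LinQuotExtends A B) :
    ∃ L : List (σ →₀ ℕ), L.Nodup ∧ Disjoint A {m | m ∈ L} ∧ B = A ∪ {m | m ∈ L} ∧
      ∀ (j : ℕ) (hj : j < L.length), LinQuotStep (A ∪ {m | m ∈ L.take j}) L[j] := by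
  induction h with
  | refl => exact ⟨[], by simp⟩
  | tail _ hstep ih =>
    obtain ⟨L, hnodup, hdisj, rfl, hL⟩ := ih
    obtain ⟨v, hv, rfl⟩ := hstep
    have hvA : v ∉ A := fun hvA => hv.notMem (.inl hvA)
    have hvL : v ∉ L := fun hvL => hv.notMem (.inr hvL)
    refine ⟨L ++ [v], ?_, ?_, ?_, ?_⟩
    · simpa only [List.concat_eq_append] using hnodup.concat hvL
    · rw [setOf_mem_concat]
      exact Set.disjoint_insert_right.2 ⟨hvA, hdisj⟩
    · rw [setOf_mem_concat, Set.union_insert]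
    · exact (forall_take_getElem_concat (fun T u => LinQuotStep (A ∪ {m | m ∈ T}) u) L v).2 ⟨hL, hv⟩

end Lists

section Ideals

variable {σ : Type*} {A D : Set (σ →₀ ℕ)} {v : σ →₀ ℕ}

lemma mon_mem_span_iff : mon K v ∈ Ideal.span (mon K '' A) ↔ ∃ u ∈ A, u ≤ v := by
  classical
  exact mem_ideal_span_monomial_image.trans (by simp [mon, support_monomial])

lemma mem_colon_span_mon_iff {f : MvPolynomial σ K} :
    f ∈ (Ideal.span (mon K '' A)).colon (Ideal.span {mon K v}) ↔
      ∀ m ∈ f.support, ∃ u ∈ A, u ≤ m + v := by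
  rw [Ideal.mem_colon_span_singleton]
  refine mem_ideal_span_monomial_image.trans ?_
  simp only [mon, mem_support_iff]
  constructor
  · intro h m hm
    exact h (m + v) (by rwa [coeff_mul_monomial, mul_one])
  · intro h m hm
    rw [coeff_mul_monomial', mul_one, ite_ne_right_iff] at hm
    simpa only [tsub_add_cancel_of_le hm.1] using h (m - v) hm.2

lemma mon_mem_colon_span_mon_iff {m : σ →₀ ℕ} :
    mon K m ∈ (Ideal.span (mon K '' A)).colon (Ideal.span {mon K v}) ↔ ∃ u ∈ A, u ≤ m + v := by
  classical
  exact (mem_colon_span_mon_iff K).trans (by simp [mon, support_monomial])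

lemma genByVars_colon_iff :
    GenByVars K ((Ideal.span (mon K '' A)).colon (Ideal.span {mon K v})) ↔ LinQuotStep A v := by
  classical
  constructor
  · rintro ⟨B, hB⟩ u hu
    have hquot : mon K (u - v) ∈ (Ideal.span (mon K '' A)).colon (Ideal.span {mon K v}) :=
      (mon_mem_colon_span_mon_iff K).2 ⟨u, hu, le_tsub_add⟩
    rw [hB] at hquot
    obtain ⟨l, hl, hne⟩ :=
      mem_ideal_span_X_image.1 hquot (u - v) (by simp [mon, support_monomial])
    have hvar : mon K (Finsupp.single l 1) ∈
        (Ideal.span (mon K '' A)).colon (Ideal.span {mon K v}) :=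
      hB ▸ Ideal.subset_span ⟨l, hl, rfl⟩
    obtain ⟨w, hw, hle⟩ := (mon_mem_colon_span_mon_iff K).1 hvar
    exact ⟨w, hw, l, tsub_pos_iff_lt.1 (pos_iff_ne_zero.2 hne), by rwa [add_comm]⟩
  · intro h
    refine ⟨{l | ∃ w ∈ A, w ≤ v + Finsupp.single l 1}, Ideal.ext fun f => ?_⟩
    rw [mem_colon_span_mon_iff, mem_ideal_span_X_image]
    refine forall₂_congr fun m _ => ⟨?_, ?_⟩
    · rintro ⟨u, hu, hle⟩
      obtain ⟨w, hw, l, hlt, hwl⟩ := h u hu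
      have hul : u l ≤ m l + v l := hle l
      exact ⟨l, ⟨w, hw, hwl⟩, by omega⟩
    · rintro ⟨l, ⟨w, hw, hwl⟩, hne⟩
      have hlm : Finsupp.single l 1 ≤ m := Finsupp.single_le_iff.2 (Nat.one_le_iff_ne_zero.2 hne)
      exact ⟨w, hw, hwl.trans (by rw [add_comm]; gcongr)⟩

variable [DecidableEq σ] {I : Ideal (MvPolynomial σ K)} {U V : Finset (σ →₀ ℕ)}

lemma minimalGens_iff_isAntichain :
    MinimalGens K I U ↔
      I = Ideal.span (mon K '' (U : Set (σ →₀ ℕ))) ∧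
        IsAntichain (· ≤ ·) (U : Set (σ →₀ ℕ)) := by
  refine and_congr_right fun _ => ?_
  simp only [mon_mem_span_iff, Finset.coe_erase, Set.mem_sdiff, Set.mem_singleton_iff]
  exact ⟨fun h u hu m hm hne hle => h m hm ⟨u, ⟨hu, hne⟩, hle⟩,
    fun h m hm ⟨u, ⟨hu, hne⟩, hle⟩ => h hu hm hne hle⟩

lemma MinimalGens.unique (hU : MinimalGens K I U) (hV : MinimalGens K I V) : U = V := by
  rw [minimalGens_iff_isAntichain] at hU hV
  have hclosure : upperClosure (U : Set (σ →₀ ℕ)) = upperClosure V := by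
    ext m
    rw [SetLike.mem_coe, SetLike.mem_coe, mem_upperClosure, mem_upperClosure,
      ← mon_mem_span_iff K, ← mon_mem_span_iff K, ← hU.1, ← hV.1]
  ext m
  rw [← Finset.mem_coe, ← hU.2.minimal_mem_upperClosure_iff_mem, hclosure,
    hV.2.minimal_mem_upperClosure_iff_mem, Finset.mem_coe]

lemma MinimalGens.hasLinearQuotients_iff (hU : MinimalGens K I U) :
    HasLinearQuotients K I ↔ LinQuotExtends ∅ (U : Set (σ →₀ ℕ)) := by
  constructor
  · rintro ⟨L, -, hL, hquot⟩
    have hext : LinQuotExtends ∅ (∅ ∪ {m | m ∈ L}) := linQuotExtends_of_list L fun j hj => by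
      rcases j.eq_zero_or_pos with rfl | hpos
      · simp [LinQuotStep]
      · simpa using (genByVars_colon_iff K).1 (hquot j hj hpos)
    simpa [hU.unique K hL] using hext
  · intro h
    obtain ⟨L, hnodup, -, hUL, hL⟩ := h.exists_list
    have hLU : L.toFinset = U := by
      ext m
      simpa using (Set.ext_iff.1 hUL m).symm
    refine ⟨L, hnodup, by rwa [hLU], fun j hj _ => (genByVars_colon_iff K).2 ?_⟩
    simpa using hL j hj

lemma MinimalGens.extendsByLinQuots_diff_iff (hU : MinimalGens K I U)
    (hUD : (U : Set (σ →₀ ℕ)) ⊆ D) :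
    ExtendsByLinQuots K I (D \ U) ↔ LinQuotExtends (U : Set (σ →₀ ℕ)) D := by
  have span_union (T : Set (σ →₀ ℕ)) :
      I ⊔ Ideal.span (mon K '' T) = Ideal.span (mon K '' ((U : Set (σ →₀ ℕ)) ∪ T)) := by
    rw [hU.1, Set.image_union, Ideal.span_union]
  simp only [ExtendsByLinQuots, span_union, genByVars_colon_iff]
  constructor
  · rintro ⟨L, -, hL, hquot⟩
    have hext := linQuotExtends_of_list L hquot
    rwa [hL, Set.union_sdiff_cancel hUD] at hext
  · intro h
    obtain ⟨L, hnodup, hdisj, rfl, hL⟩ := h.exists_list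
    exact ⟨L, hnodup, (Set.union_sdiff_cancel_left (Set.disjoint_iff.1 hdisj)).symm, hL⟩

theorem simonProperty_iff_forall_ideal (hD : IsAntichain (· ≤ ·) D) :
    SimonProperty D ↔ ∀ (I : Ideal (MvPolynomial σ K)) (U : Finset (σ →₀ ℕ)),
      MinimalGens K I U → (∀ m ∈ U, m ∈ D) → HasLinearQuotients K I →
        ExtendsByLinQuots K I (D \ U) := by
  constructor
  · intro h I U hU hUD hlin
    exact (hU.extendsByLinQuots_diff_iff K hUD).2 (h U hUD ((hU.hasLinearQuotients_iff K).1 hlin))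
  · intro h U hUD hlin
    obtain ⟨U, rfl⟩ : ∃ V : Finset (σ →₀ ℕ), ↑V = U := by
      obtain ⟨L, -, -, rfl, -⟩ := hlin.exists_list
      exact ⟨L.toFinset, by ext; simp⟩
    have hU : MinimalGens K (Ideal.span (mon K '' (U : Set (σ →₀ ℕ)))) U :=
      (minimalGens_iff_isAntichain K).2 ⟨rfl, hD.subset hUD⟩
    exact (hU.extendsByLinQuots_diff_iff K hUD).1
      (h _ U hU hUD ((hU.hasLinearQuotients_iff K).2 hlin))

end Ideals

section Divisors

variable {σ : Type*} {A B D : Set (σ →₀ ℕ)} {v N : σ →₀ ℕ}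

lemma add_single_one_le_of_lt {l : σ} (hv : v ≤ N) (hl : v l < N l) :
    v + Finsupp.single l 1 ≤ N := by
  classical
  intro i
  rw [Finsupp.add_apply, Finsupp.single_apply]
  split_ifs with h
  · exact h ▸ hl
  · exact hv i

lemma LinQuotStep.inter_Iic (h : LinQuotStep A v) (hv : v ≤ N) :
    LinQuotStep (A ∩ Set.Iic N) v := by
  rintro u ⟨huA, huN⟩
  obtain ⟨w, hw, l, hlt, hwl⟩ := h u huA
  exact ⟨w, ⟨hw, hwl.trans (add_single_one_le_of_lt hv (hlt.trans_le (huN l)))⟩, l, hlt, hwl⟩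

lemma LinQuotExtends.inter_Iic (h : LinQuotExtends A B) (N : σ →₀ ℕ) :
    LinQuotExtends (A ∩ Set.Iic N) (B ∩ Set.Iic N) := by
  refine h.map (F := (· ∩ Set.Iic N)) fun A v hv => ?_
  by_cases hvN : v ∈ Set.Iic N
  · rw [Set.insert_inter_of_mem hvN]
    exact (hv.inter_Iic hvN).linQuotExtends
  · rw [Set.insert_inter_of_notMem hvN]
    exact .refl

theorem SimonProperty.inter_Iic (h : SimonProperty D) (N : σ →₀ ℕ) :
    SimonProperty (D ∩ Set.Iic N) := by
  intro U hU hlin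
  have hext := (h U (hU.trans Set.inter_subset_left) hlin).inter_Iic N
  rwa [Set.inter_eq_left.2 (hU.trans Set.inter_subset_right)] at hext

end Divisors

section MapDomain

variable {σ τ : Type*} {π : σ → τ}

lemma exists_le_mapDomain_eq {M : σ →₀ ℕ} {w : τ →₀ ℕ} (h : w ≤ M.mapDomain π) :
    ∃ W ≤ M, W.mapDomain π = w := by
  classical
  induction M using Finsupp.induction generalizing w with
  | zero => exact ⟨0, le_rfl, (le_antisymm (by simpa using h) zero_le).symm⟩
  | single_add a k M _ _ ih =>
    rw [Finsupp.mapDomain_add, Finsupp.mapDomain_single] at h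
    obtain ⟨W, hWM, hW⟩ := ih (tsub_le_iff_left.2 h)
    refine ⟨Finsupp.single a (min (w (π a)) k) + W,
      add_le_add (Finsupp.single_mono (min_le_right _ _)) hWM, ?_⟩
    rw [Finsupp.mapDomain_add, Finsupp.mapDomain_single, hW]
    ext i
    simp only [Finsupp.add_apply, Finsupp.tsub_apply, Finsupp.single_apply]
    split_ifs with hi
    · subst hi; omega
    · omega

lemma exists_lt_of_mapDomain_lt {M N : σ →₀ ℕ} {l : τ}
    (h : M.mapDomain π l < N.mapDomain π l) : ∃ x, π x = l ∧ M x < N x := by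
  classical
  by_contra! hle
  have hN : N ≤ M + N.filter (π · ≠ l) := fun x => by
    by_cases hx : π x = l
    · simpa [hx] using hle x hx
    · simp [hx]
  have hfilter : (N.filter (π · ≠ l)).mapDomain π l = 0 :=
    Finsupp.mapDomain_of_not_mem_image_support (by simp)
  have hmap := Finsupp.mapDomain_mono (f := π) hN l
  rw [Finsupp.mapDomain_add, Finsupp.add_apply, hfilter] at hmap
  omega

lemma exists_exchange_of_toLex_lt [LinearOrder σ] {U V : σ →₀ ℕ}
    (hmap : U.mapDomain π = V.mapDomain π) (hlt : toLex V < toLex U) :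
    ∃ (W : σ →₀ ℕ) (x : σ), V x < U x ∧ W ≤ V + Finsupp.single x 1 ∧
      W.mapDomain π = V.mapDomain π ∧ toLex V < toLex W := by
  obtain ⟨x, hlow, hx⟩ := Finsupp.Lex.lt_iff.1 hlt
  simp only [ofLex_toLex] at hlow hx
  obtain ⟨y, hyx, hy⟩ : ∃ y, π y = π x ∧ U y < (V + Finsupp.single x 1 : σ →₀ ℕ) y :=
    exists_lt_of_mapDomain_lt (by simp [Finsupp.mapDomain_add, hmap])
  have hne : y ≠ x := by
    rintro rfl
    rw [Finsupp.add_apply, Finsupp.single_eq_same] at hy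
    omega
  rw [Finsupp.add_apply, Finsupp.single_eq_of_ne hne, add_zero] at hy
  have hxy : x < y := hne.lt_or_gt.resolve_left fun hyx => hy.ne' (hlow y hyx)
  obtain ⟨V, rfl⟩ := le_iff_exists_add'.1 (Finsupp.single_le_iff.2 (Nat.one_le_of_lt hy))
  refine ⟨V + Finsupp.single x 1, x, hx, ?_, ?_, ?_⟩
  · gcongr
    exact le_self_add
  · simp only [Finsupp.mapDomain_add, Finsupp.mapDomain_single, hyx]
  · rw [toLex_add, toLex_add]
    exact add_lt_add_right (Finsupp.Lex.single_lt_iff.2 hxy) _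

end MapDomain

section Polarization

variable {σ τ : Type*} {π : σ → τ} {N : σ →₀ ℕ} {A B D : Set (τ →₀ ℕ)}

/-- The divisors of `N` that the substitution of variables `π` maps into `A`. When `N` is the
product of all variables, these are the squarefree monomials lying over `A`. -/
def divisorsOver (π : σ → τ) (N : σ →₀ ℕ) (A : Set (τ →₀ ℕ)) : Set (σ →₀ ℕ) :=
  {M | M ≤ N ∧ M.mapDomain π ∈ A}

lemma finite_divisorsOver (π : σ → τ) (N : σ →₀ ℕ) (A : Set (τ →₀ ℕ)) :
    (divisorsOver π N A).Finite := by
  classical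
  exact (Set.finite_Iic N).subset fun _ hM => hM.1

lemma divisorsOver_insert (v : τ →₀ ℕ) :
    divisorsOver π N (insert v A) = divisorsOver π N A ∪ divisorsOver π N {v} := by
  ext M
  simp [divisorsOver, and_or_left, or_comm]

lemma LinQuotStep.divisorsOver_of_mapDomain {V : σ →₀ ℕ} (h : LinQuotStep A (V.mapDomain π))
    (hV : V ≤ N) : LinQuotStep (divisorsOver π N A) V := by
  rintro U ⟨hUN, hUA⟩
  obtain ⟨w, hw, l, hlt, hwl⟩ := h _ hUA
  obtain ⟨x, rfl, hx⟩ := exists_lt_of_mapDomain_lt hlt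
  rw [← Finsupp.mapDomain_single, ← Finsupp.mapDomain_add] at hwl
  obtain ⟨W, hWV, rfl⟩ := exists_le_mapDomain_eq hwl
  have hWN : W ≤ N := hWV.trans (add_single_one_le_of_lt hV (hx.trans_le (hUN x)))
  exact ⟨W, ⟨hWN, hw⟩, x, hx, hWV⟩

lemma LinQuotStep.divisorsOver_union_fiber_of_mapDomain [LinearOrder σ] {V : σ →₀ ℕ}
    (h : LinQuotStep A (V.mapDomain π)) (hV : V ≤ N) :
    LinQuotStep (divisorsOver π N A ∪
      {U | U ∈ divisorsOver π N {V.mapDomain π} ∧ toLex V < toLex U}) V := by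
  rintro U (hU | ⟨⟨hUN, hUV⟩, hlt⟩)
  · obtain ⟨W, hW, hWU⟩ := h.divisorsOver_of_mapDomain hV U hU
    exact ⟨W, .inl hW, hWU⟩
  · obtain ⟨W, x, hx, hWx, hWV, hVW⟩ := exists_exchange_of_toLex_lt hUV hlt
    have hWN : W ≤ N := hWx.trans (add_single_one_le_of_lt hV (hx.trans_le (hUN x)))
    exact ⟨W, .inr ⟨⟨hWN, hWV⟩, hVW⟩, x, hx, hWx⟩

lemma linQuotExtends_divisorsOver (π : σ → τ) (N : σ →₀ ℕ) (h : LinQuotExtends A B) :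
    LinQuotExtends (divisorsOver π N A) (divisorsOver π N B) := by
  obtain ⟨_, _⟩ := exists_wellFoundedLT σ
  refine h.map fun A v hv => ?_
  have hfin := finite_divisorsOver π N {v}
  rw [divisorsOver_insert, ← hfin.coe_toFinset]
  refine linQuotExtends_union_of_injective toLex.injective _ fun V hV => ?_
  obtain ⟨hVN, rfl⟩ := hfin.mem_toFinset.1 hV
  simpa only [hfin.mem_toFinset] using hv.divisorsOver_union_fiber_of_mapDomain hVN

lemma LinQuotStep.of_divisorsOver {V : σ →₀ ℕ} (h : LinQuotStep (divisorsOver π N A) V)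
    (hV : V ≤ N) (hA : ∀ u ∈ A, u ≤ N.mapDomain π) : LinQuotStep A (V.mapDomain π) := by
  intro u hu
  -- Lift `u` so that the lift meets `V` in a lift of the greatest common divisor of `u` and `π V`.
  obtain ⟨G, hGV, hG⟩ := exists_le_mapDomain_eq (inf_le_right : u ⊓ V.mapDomain π ≤ _)
  have hGN := hGV.trans hV
  have hrest : u - u ⊓ V.mapDomain π ≤ (N - G).mapDomain π := by
    rw [tsub_le_iff_left, ← hG, ← Finsupp.mapDomain_add, add_tsub_cancel_of_le hGN]
    exact hA u hu
  obtain ⟨E, hEN, hE⟩ := exists_le_mapDomain_eq hrest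
  have hGE : G + E ∈ divisorsOver π N A := by
    refine ⟨(le_tsub_iff_left hGN).1 hEN, ?_⟩
    rwa [Finsupp.mapDomain_add, hG, hE, add_tsub_cancel_of_le inf_le_left]
  obtain ⟨W, hW, x, hx, hWV⟩ := h _ hGE
  refine ⟨W.mapDomain π, hW.2, π x, ?_, ?_⟩
  · have hxE : Finsupp.single x 1 ≤ E := by
      have hGVx := hGV x
      rw [Finsupp.add_apply] at hx
      exact Finsupp.single_le_iff.2 (by omega)
    have hπx := Finsupp.mapDomain_mono (f := π) hxE (π x)
    rw [Finsupp.mapDomain_single, Finsupp.single_eq_same, hE, Finsupp.tsub_apply,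
      Finsupp.inf_apply] at hπx
    omega
  · simpa only [Finsupp.mapDomain_add, Finsupp.mapDomain_single]
      using Finsupp.mapDomain_mono (f := π) hWV

theorem SimonProperty.of_divisorsOver (h : SimonProperty (divisorsOver π N D))
    (hD : ∀ u ∈ D, u ≤ N.mapDomain π) : SimonProperty D := by
  have hfin : D.Finite := by
    classical
    exact (Set.finite_Iic (N.mapDomain π)).subset hD
  refine simonProperty_of_forall_exists_linQuotStep hfin fun U hUD hU => ?_
  have hext : LinQuotExtends (divisorsOver π N U) (divisorsOver π N D) := by
    refine h _ (fun V hV => ⟨hV.1, hUD.subset hV.2⟩) ?_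
    simpa [divisorsOver] using linQuotExtends_divisorsOver π N hU
  obtain ⟨u, huD, huU⟩ := Set.exists_of_ssubset hUD
  obtain ⟨M, hMN, rfl⟩ := exists_le_mapDomain_eq (hD u huD)
  rcases hext.cases_head with heq | ⟨_, ⟨V, hV, rfl⟩, hrest⟩
  · have hM : M ∈ divisorsOver π N D := ⟨hMN, huD⟩
    exact absurd (heq ▸ hM).2 huU
  · obtain ⟨hVN, hVD⟩ : V ∈ divisorsOver π N D := LinQuotExtends.subset hrest (Set.mem_insert V _)
    exact ⟨_, hVD, LinQuotStep.of_divisorsOver hV hVN fun u hu => hD u (hUD.subset hu)⟩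

end Polarization

section Squarefree

variable {σ τ : Type*} {d : ℕ}

lemma mdeg_mapDomain (π : σ → τ) (M : σ →₀ ℕ) : mdeg (M.mapDomain π) = mdeg M :=
  Finsupp.degree_mapDomain π M

lemma isAntichain_setOf_mdeg_eq (d : ℕ) : IsAntichain (· ≤ ·) {m : σ →₀ ℕ | mdeg m = d} := by
  rintro a ha _ hb hne hle
  obtain ⟨c, rfl⟩ := le_iff_exists_add.1 hle
  have hc : c.degree = 0 := by
    have hdeg : (a + c).degree = a.degree := Eq.trans hb ha.symm
    simpa using hdeg
  exact hne (by simp [(Finsupp.degree_eq_zero_iff c).1 hc])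

/-- The exponent vector of the product of all variables, whose divisors are the squarefree
monomials. -/
def allOnes (σ : Type*) [Finite σ] : σ →₀ ℕ := Finsupp.equivFunOnFinite.symm 1

lemma le_allOnes_iff [Finite σ] {m : σ →₀ ℕ} : m ≤ allOnes σ ↔ ∀ i, m i ≤ 1 := Iff.rfl

lemma mapDomain_allOnes_apply [Fintype σ] [DecidableEq τ] (π : σ → τ) (i : τ) :
    (allOnes σ).mapDomain π i = Finset.card {x | π x = i} := by
  simp [Finsupp.mapDomain, Finsupp.sum_fintype, Finsupp.finsetSum_apply, allOnes,
    Finsupp.single_apply]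

theorem SimonProperty.squarefree [Finite σ] (h : SimonProperty {m : σ →₀ ℕ | mdeg m = d}) :
    SimonProperty {m : σ →₀ ℕ | (∀ i, m i ≤ 1) ∧ mdeg m = d} := by
  convert h.inter_Iic (allOnes σ) using 1
  exact Set.ext fun m => and_comm

theorem SimonProperty.of_squarefree [Fintype σ] [DecidableEq τ] (π : σ → τ)
    (hπ : ∀ i, d ≤ Finset.card {x | π x = i})
    (h : SimonProperty {m : σ →₀ ℕ | (∀ i, m i ≤ 1) ∧ mdeg m = d}) :
    SimonProperty {m : τ →₀ ℕ | mdeg m = d} := by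
  have hover : divisorsOver π (allOnes σ) {m | mdeg m = d} =
      {m : σ →₀ ℕ | (∀ i, m i ≤ 1) ∧ mdeg m = d} :=
    Set.ext fun M => and_congr le_allOnes_iff <| by
      rw [Set.mem_ofPred_eq, mdeg_mapDomain]
  refine SimonProperty.of_divisorsOver (hover ▸ h) fun u hu i => ?_
  calc u i ≤ mdeg u := Finsupp.le_degree i u
    _ = d := hu
    _ ≤ (allOnes σ).mapDomain π i := mapDomain_allOnes_apply π i ▸ hπ i

lemma card_filter_divNat_eq {n : ℕ} (i : Fin n) :
    Finset.card {x : Fin (n * d) | x.divNat = i} = d := by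
  have divNat_eq (p : Fin n × Fin d) : (finProdFinEquiv p).divNat = p.1 :=
    congrArg Prod.fst (finProdFinEquiv.symm_apply_apply p)
  rw [Finset.card_filter, ← finProdFinEquiv.sum_comp, Fintype.sum_prod_type]
  simp [divNat_eq]

end Squarefree

/-- Simon's conjecture (every equigenerated squarefree monomial ideal with linear quotients
extends to the squarefree Veronese ideal `I_{n,d}` by linear quotients) is equivalent to the
monomial Simon conjecture (every equigenerated monomial ideal with linear quotients extends
to `m^d` by linear quotients). -/
theorem stmt5 :
    (∀ (n d : ℕ) (I : Ideal (MvPolynomial (Fin n) K)) (U : Finset (Fin n →₀ ℕ)),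
      MinimalGens K I U →
      (∀ m ∈ U, (∀ i, m i ≤ 1) ∧ mdeg m = d) →
      HasLinearQuotients K I →
      ExtendsByLinQuots K I
        ({m : Fin n →₀ ℕ | (∀ i, m i ≤ 1) ∧ mdeg m = d} \ (U : Set (Fin n →₀ ℕ)))) ↔
    (∀ (n d : ℕ) (I : Ideal (MvPolynomial (Fin n) K)) (U : Finset (Fin n →₀ ℕ)),
      MinimalGens K I U →
      (∀ m ∈ U, mdeg m = d) →
      HasLinearQuotients K I →
      ExtendsByLinQuots K I
        ({m : Fin n →₀ ℕ | mdeg m = d} \ (U : Set (Fin n →₀ ℕ)))) := by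
  have hmon (n d : ℕ) := simonProperty_iff_forall_ideal K (isAntichain_setOf_mdeg_eq (σ := Fin n) d)
  have hsqfree (n d : ℕ) := simonProperty_iff_forall_ideal K
    ((isAntichain_setOf_mdeg_eq (σ := Fin n) d).subset
      fun m (hm : (∀ i, m i ≤ 1) ∧ mdeg m = d) => hm.2)
  constructor
  · intro h n d
    exact (hmon n d).1 (((hsqfree (n * d) d).2 (h (n * d) d)).of_squarefree Fin.divNat
      fun i => (card_filter_divNat_eq i).ge)
  · intro h n d
    exact (hsqfree n d).1 ((hmon n d).2 (h n d)).squarefree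

end
end
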